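/- arXiv:2206.04346 — 2 statements merged into one kernel-verified Lean document; each statement's English description precedes it below -/
import Mathlib

section
/- (Uniqueness of maximal Blaschke products) Let B_1 and B_2 be maximal Blaschke products such that B_1' and B_2' have exactly the same zeros in 𝔻, with the same multiplicities. Then B_2 = T ∘ B_1 for some conformal automorphism T of 𝔻. -/
open Metric Filter

/-- The order of vanishing of `f` at `z`. -/
noncomputable def vOrder (f : ℂ → ℂ) (z : ℂ) : ℕ∞ :=
  sInf ((fun n : ℕ => (n : ℕ∞)) '' {n : ℕ | iteratedDeriv n f z ≠ 0})

/-- A (finite or infinite) Blaschke product: a holomorphic function on the open unit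
disk of the form `B(z) = η z^m ∏_j (|z_j|/z_j)(z_j − z)/(1 − conj z_j · z)`, where
`|η| = 1`, `m ≥ 0`, the points `z_j ∈ 𝔻 \ {0}` satisfy the Blaschke condition
`Σ_j (1 − |z_j|) < ∞`, and the (possibly infinite) product converges. -/
def IsBlaschkeProduct (B : ℂ → ℂ) : Prop :=
  (∀ z ∈ Metric.ball (0 : ℂ) 1, DifferentiableAt ℂ B z) ∧
  ∃ (η : ℂ) (m : ℕ) (ι : Type) (a : ι → ℂ),
    ‖η‖ = 1 ∧ (∀ j, a j ≠ 0 ∧ ‖a j‖ < 1) ∧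
    Summable (fun j => 1 - ‖a j‖) ∧
    ∀ z ∈ Metric.ball (0 : ℂ) 1,
      B z = η * z ^ m *
        ∏' j, (((‖a j‖ : ℝ) : ℂ) / a j) * ((a j - z) / (1 - (starRingEnd ℂ) (a j) * z))

/-- A Blaschke product `B` is *maximal* if for every nonconstant holomorphic map `f`
of the open unit disk into the closed unit disk whose critical set contains that of
`B` (with multiplicities), one has
`|f'(z)| (1 − |B(z)|²) ≤ |B'(z)| (1 − |f(z)|²)` on the disk. -/
def IsMaximalBlaschke (B : ℂ → ℂ) : Prop :=
  IsBlaschkeProduct B ∧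
  ∀ f : ℂ → ℂ,
    (∀ z ∈ Metric.ball (0 : ℂ) 1, DifferentiableAt ℂ f z) →
    (∀ z ∈ Metric.ball (0 : ℂ) 1, ‖f z‖ ≤ 1) →
    (∃ z ∈ Metric.ball (0 : ℂ) 1, ∃ w ∈ Metric.ball (0 : ℂ) 1, f z ≠ f w) →
    (∀ z ∈ Metric.ball (0 : ℂ) 1, vOrder (deriv B) z ≤ vOrder (deriv f) z) →
    ∀ z ∈ Metric.ball (0 : ℂ) 1,
      ‖deriv f z‖ * (1 - ‖B z‖ ^ 2) ≤ ‖deriv B z‖ * (1 - ‖f z‖ ^ 2)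

open Topology

lemma mbu_A (m : ℕ) (hm : m ≠ 0) (p : ℂ) (W : ℂ → ℂ) (C : ℂ → ℝ) (hW : ContinuousAt W p)
    (hC : ContinuousAt C p)
    (h : ∀ᶠ z in 𝓝 p, ((z - p) ^ m * W z).re ≤ ‖z - p‖ ^ (m + 1) * C z) : W p = 0 := by
  obtain ⟨ω, hω⟩ := IsAlgClosed.exists_pow_nat_eq ((starRingEnd ℂ) (W p)) (Nat.pos_of_ne_zero hm)
  have hpath : Tendsto (fun s : ℝ => p + (s : ℂ) * ω) (𝓝[>] 0) (𝓝 p) := by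
    have : Continuous (fun s : ℝ => p + (s : ℂ) * ω) := by fun_prop
    have h2 := this.tendsto 0
    simp only [Complex.ofReal_zero, zero_mul, add_zero] at h2
    exact h2.mono_left nhdsWithin_le_nhds
  have hs : Tendsto (fun s : ℝ => s) (𝓝[>] 0) (𝓝 0) := tendsto_id.mono_left nhdsWithin_le_nhds
  have h1 : Tendsto (fun s : ℝ => ((starRingEnd ℂ) (W p) * W (p + (s : ℂ) * ω)).re) (𝓝[>] 0)
      (𝓝 (((starRingEnd ℂ) (W p) * W p).re)) :=
    (Complex.continuous_re.tendsto _).comp (tendsto_const_nhds.mul (hW.tendsto.comp hpath))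
  have h2 : Tendsto (fun s : ℝ => s * (‖ω‖ ^ (m + 1) * C (p + (s : ℂ) * ω))) (𝓝[>] 0)
      (𝓝 (0 * (‖ω‖ ^ (m + 1) * C p))) :=
    hs.mul (tendsto_const_nhds.mul (hC.tendsto.comp hpath))
  have h3 := le_of_tendsto_of_tendsto h1 h2 (by
    filter_upwards [hpath.eventually h, self_mem_nhdsWithin] with s hs hpos
    have hpos : 0 < s := hpos
    simp only [add_sub_cancel_left, mul_pow, hω, norm_mul, Complex.norm_real,
      Real.norm_of_nonneg hpos.le] at hs
    have e : (((s : ℂ) ^ m * (starRingEnd ℂ) (W p) * W (p + (s : ℂ) * ω))).re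
        = s ^ m * ((starRingEnd ℂ) (W p) * W (p + (s : ℂ) * ω)).re := by
      rw [mul_assoc, ← Complex.ofReal_pow, Complex.re_ofReal_mul]
    rw [e] at hs
    have hp : 0 < s ^ m := by positivity
    refine le_of_mul_le_mul_left (hs.trans (le_of_eq ?_)) hp
    ring)
  rw [zero_mul, mul_comm, Complex.mul_conj, Complex.ofReal_re] at h3
  exact Complex.normSq_eq_zero.1 (le_antisymm h3 (Complex.normSq_nonneg _))

lemma mbu_local (f g : ℂ → ℂ) (p : ℂ) (hf : AnalyticAt ℂ f p) (hg : AnalyticAt ℂ g p)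
    (hfp : f p = 0) (hgp : g p = 0) (hf' : deriv f p ≠ 0)
    (h : ∀ᶠ z in 𝓝 p, ‖deriv g z‖ * (1 - ‖f z‖ ^ 2) = ‖deriv f z‖ * (1 - ‖g z‖ ^ 2)) :
    ∃ c : ℂ, ‖c‖ = 1 ∧ ∀ᶠ z in 𝓝 p, g z = c * f z := by
  have hp := h.self_of_nhds
  simp [hfp, hgp] at hp
  set c := deriv g p / deriv f p with hc
  have hc1 : ‖c‖ = 1 := by
    rw [hc, norm_div, hp, div_self (norm_ne_zero_iff.2 hf')]
  refine ⟨c, hc1, ?_⟩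
  have hd : AnalyticAt ℂ (fun z => g z - c * f z) p := hg.sub (analyticAt_const.mul hf)
  by_contra hne
  have hne' : ¬ ∀ᶠ z in 𝓝 p, (fun z => g z - c * f z) z = 0 := by
    intro h0; apply hne; filter_upwards [h0] with z hz using sub_eq_zero.1 hz
  obtain ⟨n, u, hu, hup, hdu⟩ := hd.exists_eventuallyEq_pow_smul_nonzero_iff.2 hne'
  have hdd : ∀ᶠ z in 𝓝 p, deriv (fun z => g z - c * f z) z = deriv g z - c * deriv f z := by
    filter_upwards [hf.eventually_analyticAt, hg.eventually_analyticAt] with z h1 h2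
    rw [deriv_fun_sub h2.differentiableAt (h1.differentiableAt.const_mul c),
      deriv_const_mul _ h1.differentiableAt]
  have hdd2 : ∀ᶠ z in 𝓝 p, deriv (fun z => g z - c * f z) z =
      n * (z - p) ^ (n - 1) * u z + (z - p) ^ n * deriv u z := by
    filter_upwards [hdu.eventually_nhds, hu.eventually_analyticAt] with z h1 h2
    rw [EventuallyEq.deriv_eq h1]
    simp only [smul_eq_mul]
    have := (((hasDerivAt_id z).sub_const p).pow n).mul h2.differentiableAt.hasDerivAt
    simp at this
    exact this.deriv
  have hd0 : deriv g p - c * deriv f p = 0 := by rw [hc]; field_simp; ring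
  have hn : ∃ m, m ≠ 0 ∧ n = m + 1 := by
    rcases n with _ | _ | n
    · have := hdu.self_of_nhds
      simp [hfp, hgp] at this; exact absurd this.symm hup
    · have := hdd2.self_of_nhds
      rw [hdd.self_of_nhds, hd0] at this
      simp at this; exact absurd this.symm hup
    · exact ⟨n + 1, by simp, rfl⟩
  obtain ⟨m, hm, rfl⟩ := hn
  have cf := hf.continuousAt
  have cg := hg.continuousAt
  have cf' := hf.deriv.continuousAt
  have cu := hu.continuousAt
  have cu' := hu.deriv.continuousAt
  have key := mbu_A m hm p
    (fun z => (((m + 1 : ℕ) : ℂ) * u z + (z - p) * deriv u z) * (starRingEnd ℂ) (c * deriv f z)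
      * ((1 - ‖f z‖ ^ 2 : ℝ) : ℂ))
    (fun z => ‖deriv f z‖ ^ 2 * ((‖f z‖ + ‖g z‖) * ‖u z‖)) (by fun_prop) (by fun_prop) (by
      have hlt : ∀ᶠ z in 𝓝 p, ‖f z‖ < 1 := by
        have := cf.norm.tendsto
        rw [hfp, norm_zero] at this
        exact this.eventually (gt_mem_nhds one_pos)
      filter_upwards [hdu, hdd, hdd2, h, hlt] with z h1 h2 h3 h4 h5
      have e1 : (z - p) ^ m * ((((m + 1 : ℕ) : ℂ) * u z + (z - p) * deriv u z) *
          (starRingEnd ℂ) (c * deriv f z) * ((1 - ‖f z‖ ^ 2 : ℝ) : ℂ)) =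
          ((1 - ‖f z‖ ^ 2 : ℝ) : ℂ) * ((deriv g z - c * deriv f z) *
            (starRingEnd ℂ) (c * deriv f z)) := by
        rw [← h2, h3, Nat.add_sub_cancel]; ring
      rw [e1, Complex.re_ofReal_mul, sub_mul (deriv g z), Complex.mul_conj, Complex.sub_re,
        Complex.ofReal_re, Complex.normSq_eq_norm_sq, norm_mul, hc1, one_mul]
      have e2 : (deriv g z * (starRingEnd ℂ) (c * deriv f z)).re ≤ ‖deriv g z‖ * ‖deriv f z‖ := by
        refine (Complex.re_le_norm _).trans (le_of_eq ?_)
        rw [norm_mul, RCLike.norm_conj, norm_mul, hc1, one_mul]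
      have e3 : ‖f z‖ - ‖g z‖ ≤ ‖z - p‖ ^ (m + 1) * ‖u z‖ := by
        have : ‖g z - c * f z‖ = ‖z - p‖ ^ (m + 1) * ‖u z‖ := by
          rw [h1, norm_smul, norm_pow]
        rw [← this]
        have := norm_sub_norm_le (c * f z) (g z)
        rw [norm_mul, hc1, one_mul, norm_sub_rev] at this
        exact this
      have e4 : 0 ≤ 1 - ‖f z‖ ^ 2 := by nlinarith [norm_nonneg (f z)]
      calc (1 - ‖f z‖ ^ 2) * ((deriv g z * (starRingEnd ℂ) (c * deriv f z)).re - ‖deriv f z‖ ^ 2)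
          ≤ (1 - ‖f z‖ ^ 2) * (‖deriv g z‖ * ‖deriv f z‖ - ‖deriv f z‖ ^ 2) := by gcongr
        _ = ‖deriv f z‖ ^ 2 * ((‖f z‖ + ‖g z‖) * (‖f z‖ - ‖g z‖)) := by
          linear_combination ‖deriv f z‖ * h4
        _ ≤ ‖deriv f z‖ ^ 2 * ((‖f z‖ + ‖g z‖) * (‖z - p‖ ^ (m + 1) * ‖u z‖)) := by gcongr
        _ = _ := by ring)
  have hc0 : c ≠ 0 := by intro h0; simp [h0] at hc1
  have hm1 : (m : ℂ) + 1 ≠ 0 := by exact_mod_cast m.succ_ne_zero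
  simp [hfp, hup, hf', hc0, hm1] at key

lemma mbu_den {a w : ℂ} (ha : ‖a‖ < 1) (hw : ‖w‖ ≤ 1) : 1 - (starRingEnd ℂ) a * w ≠ 0 := by
  intro h
  have h1 : (starRingEnd ℂ) a * w = 1 := (sub_eq_zero.1 h).symm
  have h2 := congrArg norm h1
  rw [norm_mul, RCLike.norm_conj, norm_one] at h2
  nlinarith [norm_nonneg a, norm_nonneg w]

lemma mbu_id (a w : ℂ) : ‖1 - (starRingEnd ℂ) a * w‖ ^ 2 - ‖a - w‖ ^ 2 =
    (1 - ‖a‖ ^ 2) * (1 - ‖w‖ ^ 2) := by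
  simp only [← Complex.normSq_eq_norm_sq, Complex.normSq_apply]
  simp
  ring

lemma mbu_factor_le {a w : ℂ} (ha : ‖a‖ < 1) (hw : ‖w‖ ≤ 1) :
    ‖(a - w) / (1 - (starRingEnd ℂ) a * w)‖ ≤ 1 := by
  rw [norm_div]
  apply div_le_one_of_le₀ _ (norm_nonneg _)
  have := mbu_id a w
  have h1 : 0 ≤ (1 - ‖a‖ ^ 2) * (1 - ‖w‖ ^ 2) :=
    mul_nonneg (by nlinarith [norm_nonneg a]) (by nlinarith [norm_nonneg w])
  exact le_of_sq_le_sq (by linarith) (norm_nonneg _)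

lemma mbu_factor_sub {a z : ℂ} (ha0 : a ≠ 0) (ha : ‖a‖ < 1) (hz : ‖z‖ < 1) :
    ‖(((‖a‖ : ℝ) : ℂ) / a) * ((a - z) / (1 - (starRingEnd ℂ) a * z)) - 1‖ ≤
      (1 - ‖a‖) * (2 / (1 - ‖z‖)) := by
  have hd := mbu_den ha hz.le
  have hconj : a * (starRingEnd ℂ) a = ((‖a‖ : ℝ) : ℂ) ^ 2 := by
    rw [Complex.mul_conj, Complex.normSq_eq_norm_sq]; push_cast; rfl
  have e : (((‖a‖ : ℝ) : ℂ) / a) * ((a - z) / (1 - (starRingEnd ℂ) a * z)) - 1 =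
      (((‖a‖ - 1 : ℝ) : ℂ) / (1 - (starRingEnd ℂ) a * z)) * (1 + ((‖a‖ : ℝ) : ℂ) / a * z) := by
    obtain ⟨D, hD⟩ : ∃ D, D = 1 - (starRingEnd ℂ) a * z := ⟨_, rfl⟩
    rw [← hD] at hd ⊢
    field_simp
    push_cast
    linear_combination z * hconj - a * hD
  rw [e, norm_mul, norm_div, Complex.norm_real, Real.norm_of_nonpos (by linarith)]
  have h1 : ‖1 + ((‖a‖ : ℝ) : ℂ) / a * z‖ ≤ 2 := by
    refine (norm_add_le _ _).trans ?_
    rw [norm_mul, norm_div, Complex.norm_real, norm_norm, div_self (norm_ne_zero_iff.2 ha0),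
      norm_one]
    linarith
  have h2 : 1 - ‖z‖ ≤ ‖1 - (starRingEnd ℂ) a * z‖ := by
    have := norm_sub_norm_le 1 ((starRingEnd ℂ) a * z)
    rw [norm_one, norm_mul, RCLike.norm_conj] at this
    nlinarith [norm_nonneg a, norm_nonneg z]
  have hz' : 0 < 1 - ‖z‖ := by linarith
  have ha' : 0 ≤ 1 - ‖a‖ := by linarith
  calc -(‖a‖ - 1) / ‖1 - (starRingEnd ℂ) a * z‖ * ‖1 + ((‖a‖ : ℝ) : ℂ) / a * z‖
      = (1 - ‖a‖) / ‖1 - (starRingEnd ℂ) a * z‖ * ‖1 + ((‖a‖ : ℝ) : ℂ) / a * z‖ := by ring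
    _ ≤ (1 - ‖a‖) / (1 - ‖z‖) * 2 := by gcongr
    _ = _ := by ring

lemma mbu_norm_le {B : ℂ → ℂ} (hB : IsBlaschkeProduct B) :
    ∀ z ∈ Metric.ball (0 : ℂ) 1, ‖B z‖ ≤ 1 := by
  obtain ⟨-, η, m, ι, a, hη, ha, hs, hB⟩ := hB
  intro z hz
  rw [hB z hz, norm_mul, norm_mul, hη, one_mul, norm_pow]
  have hz1 : ‖z‖ < 1 := by simpa using hz
  have h1 : ‖z‖ ^ m ≤ 1 := pow_le_one₀ (norm_nonneg _) hz1.le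
  refine mul_le_one₀ h1 (norm_nonneg _) ?_
  by_cases hm : Multipliable (fun j => (((‖a j‖ : ℝ) : ℂ) / a j) *
      ((a j - z) / (1 - (starRingEnd ℂ) (a j) * z)))
  · refine le_of_tendsto hm.hasProd.norm (Eventually.of_forall fun s => ?_)
    beta_reduce
    refine Finset.prod_le_one (fun _ _ => norm_nonneg _) fun j _ => ?_
    rw [norm_mul, norm_div, Complex.norm_real, norm_norm,
      div_self (norm_ne_zero_iff.2 (ha j).1), one_mul]
    exact mbu_factor_le (ha j).2 hz1.le
  · rw [tprod_eq_one_of_not_multipliable hm, norm_one]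

lemma mbu_const {B : ℂ → ℂ} (hB : IsBlaschkeProduct B)
    (hc : ∀ z ∈ Metric.ball (0 : ℂ) 1, B z = B 0) : ‖B 0‖ = 1 := by
  obtain ⟨-, η, m, ι, a, hη, ha, hs, hB⟩ := hB
  have h0 : (0 : ℂ) ∈ Metric.ball (0 : ℂ) 1 := by simp
  have hη0 : η ≠ 0 := by intro h; simp [h] at hη
  by_cases hz : ∃ z ∈ Metric.ball (0 : ℂ) 1, B z = 0
  · exfalso
    obtain ⟨z, hz, hBz⟩ := hz
    have hB0 : B 0 = 0 := by rw [← hc z hz, hBz]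
    have hι : Countable ι := by
      have := hs.countable_support
      rw [Function.support_eq_univ (fun j => by have := (ha j).2; intro h; linarith)] at this
      exact Set.countable_univ_iff.1 this
    have hcount : (insert 0 (Set.range a)).Countable := (Set.countable_range a).insert 0
    obtain ⟨w, hw, hwn⟩ : ∃ w ∈ Metric.ball (0 : ℂ) 1, w ∉ insert 0 (Set.range a) := by
      have hd := hcount.dense_compl ℂ
      obtain ⟨w, hw1, hw2⟩ := hd.inter_open_nonempty _ Metric.isOpen_ball ⟨0, h0⟩
      exact ⟨w, hw1, hw2⟩
    have hw1 : ‖w‖ < 1 := by simpa using hw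
    have hBw := (hc w hw).trans hB0
    rw [hB w hw] at hBw
    have hw0 : w ≠ 0 := fun h => hwn (by simp [h])
    have hwa : ∀ j, a j ≠ w := fun j h => hwn (Or.inr ⟨j, h⟩)
    have hne := tprod_one_add_ne_zero_of_summable
      (f := fun j => (((‖a j‖ : ℝ) : ℂ) / a j) *
        ((a j - w) / (1 - (starRingEnd ℂ) (a j) * w)) - 1)
      (fun j => by
        have := (ha j).1
        have h2 := mbu_den (ha j).2 hw1.le
        have h3 := sub_ne_zero.2 (hwa j)
        have h4 : ((‖a j‖ : ℝ) : ℂ) ≠ 0 := by exact_mod_cast norm_ne_zero_iff.2 this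
        rw [add_sub_cancel]
        exact mul_ne_zero (div_ne_zero h4 this) (div_ne_zero h3 h2))
      (Summable.of_nonneg_of_le (fun _ => norm_nonneg _)
        (fun j => mbu_factor_sub (ha j).1 (ha j).2 hw1) (hs.mul_right _))
    simp only [add_sub_cancel] at hne
    exact mul_ne_zero (mul_ne_zero hη0 (pow_ne_zero _ hw0)) hne hBw
  · push Not at hz
    have hm : m = 0 := by
      by_contra hm
      exact hz 0 h0 (by rw [hB 0 h0]; simp [hm])
    have hι : IsEmpty ι := by
      by_contra h
      rw [not_isEmpty_iff] at h
      obtain ⟨j⟩ := h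
      have hj : a j ∈ Metric.ball (0 : ℂ) 1 := by simpa using (ha j).2
      apply hz _ hj
      rw [hB _ hj, tprod_of_exists_eq_zero ⟨j, by simp⟩, mul_zero]
    rw [hB 0 h0, hm]
    simp [hη]

lemma mbu_norm_lt {B : ℂ → ℂ} (hd : ∀ z ∈ Metric.ball (0 : ℂ) 1, DifferentiableAt ℂ B z)
    (hle : ∀ z ∈ Metric.ball (0 : ℂ) 1, ‖B z‖ ≤ 1)
    (hnc : ∃ z ∈ Metric.ball (0 : ℂ) 1, ∃ w ∈ Metric.ball (0 : ℂ) 1, B z ≠ B w) :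
    ∀ z ∈ Metric.ball (0 : ℂ) 1, ‖B z‖ < 1 := by
  intro p hp
  by_contra hge
  have h1 : ‖B p‖ = 1 := le_antisymm (hle p hp) (not_lt.1 hge)
  have := Complex.eqOn_of_isPreconnected_of_isMaxOn_norm (f := B)
    (convex_ball (0 : ℂ) 1).isPreconnected Metric.isOpen_ball
    (fun z hz => (hd z hz).differentiableWithinAt) hp
    (fun z hz => by simpa [h1] using hle z hz)
  obtain ⟨z, hz, w, hw, hzw⟩ := hnc
  exact hzw ((this hz).trans (this hw).symm)

lemma mbu_deriv {B : ℂ → ℂ} {a z : ℂ} (hd : DifferentiableAt ℂ B z) (ha : ‖a‖ < 1)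
    (hz : ‖B z‖ < 1) :
    ∃ K : ℝ, 0 < K ∧
    ‖deriv (fun x => (a - B x) / (1 - (starRingEnd ℂ) a * B x)) z‖ = ‖deriv B z‖ * K ∧
    1 - ‖(a - B z) / (1 - (starRingEnd ℂ) a * B z)‖ ^ 2 = (1 - ‖B z‖ ^ 2) * K := by
  have hden := mbu_den ha hz.le
  have hden' := norm_pos_iff.2 hden
  have ha2 : 0 < 1 - ‖a‖ ^ 2 := by nlinarith [norm_nonneg a]
  refine ⟨(1 - ‖a‖ ^ 2) / ‖1 - (starRingEnd ℂ) a * B z‖ ^ 2, by positivity, ?_, ?_⟩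
  · have h := ((hd.hasDerivAt.const_sub a).fun_div ((hd.hasDerivAt.const_mul
      ((starRingEnd ℂ) a)).const_sub 1) hden).deriv
    rw [h]
    have hconj : a * (starRingEnd ℂ) a = ((‖a‖ : ℝ) : ℂ) ^ 2 := by
      rw [Complex.mul_conj, Complex.normSq_eq_norm_sq]; push_cast; rfl
    have e : -deriv B z * (1 - (starRingEnd ℂ) a * B z) -
        (a - B z) * -((starRingEnd ℂ) a * deriv B z) =
        -(deriv B z) * ((1 - ‖a‖ ^ 2 : ℝ) : ℂ) := by
      push_cast
      linear_combination (deriv B z) * hconj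
    rw [e, norm_div, norm_mul, norm_neg, Complex.norm_real, Real.norm_of_nonneg ha2.le, norm_pow]
    ring
  · have := mbu_id a (B z)
    have hne := (pow_pos hden' 2).ne'
    rw [norm_div, div_pow, mul_div_assoc', eq_div_iff hne, sub_mul, div_mul_cancel₀ _ hne]
    linarith

lemma mbu_order_top {B : ℂ → ℂ} (hc : ∀ z ∈ Metric.ball (0 : ℂ) 1, B z = B 0) :
    ∀ z ∈ Metric.ball (0 : ℂ) 1, vOrder (deriv B) z = ⊤ := by
  intro z hz
  have h1 : B =ᶠ[𝓝 z] fun _ => B 0 := by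
    filter_upwards [Metric.isOpen_ball.mem_nhds hz] with x hx using hc x hx
  have h2 : deriv B =ᶠ[𝓝 z] fun _ => 0 := by
    filter_upwards [h1.eventually_nhds] with x hx
    rw [EventuallyEq.deriv_eq hx]; simp
  have : {n : ℕ | iteratedDeriv n (deriv B) z ≠ 0} = ∅ := by
    ext n
    simp [h2.iteratedDeriv_eq n]
  rw [vOrder, this]; simp

lemma mbu_const_of_deriv {B : ℂ → ℂ} (hd : ∀ z ∈ Metric.ball (0 : ℂ) 1, DifferentiableAt ℂ B z)
    (h : ∀ z ∈ Metric.ball (0 : ℂ) 1, deriv B z = 0) :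
    ∀ z ∈ Metric.ball (0 : ℂ) 1, B z = B 0 := by
  intro z hz
  exact Metric.isOpen_ball.is_const_of_deriv_eq_zero (convex_ball (0 : ℂ) 1).isPreconnected
    (fun z hz => (hd z hz).differentiableWithinAt) h hz (by simp)

lemma mbu_const_of_top {B : ℂ → ℂ} (hd : ∀ z ∈ Metric.ball (0 : ℂ) 1, DifferentiableAt ℂ B z)
    (h : ∀ z ∈ Metric.ball (0 : ℂ) 1, vOrder (deriv B) z = ⊤) :
    ∀ z ∈ Metric.ball (0 : ℂ) 1, B z = B 0 := by
  refine mbu_const_of_deriv hd fun z hz => ?_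
  by_contra hne
  have : vOrder (deriv B) z ≤ ((0 : ℕ) : ℕ∞) := sInf_le ⟨0, by simpa using hne, rfl⟩
  rw [h z hz] at this
  simp at this

lemma mbu_both_const {B₁ B₂ : ℂ → ℂ} (h1 : IsBlaschkeProduct B₁) (h2 : IsBlaschkeProduct B₂)
    (c1 : ∀ z ∈ Metric.ball (0 : ℂ) 1, B₁ z = B₁ 0)
    (c2 : ∀ z ∈ Metric.ball (0 : ℂ) 1, B₂ z = B₂ 0) :
    ∃ (τ : ℂ) (z₀ : ℂ), ‖τ‖ = 1 ∧ ‖z₀‖ < 1 ∧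
      ∀ z ∈ Metric.ball (0 : ℂ) 1,
        B₂ z = τ * (z₀ - B₁ z) / (1 - (starRingEnd ℂ) z₀ * B₁ z) := by
  have n1 := mbu_const h1 c1
  have n2 := mbu_const h2 c2
  have : B₁ 0 ≠ 0 := by intro h; simp [h] at n1
  refine ⟨-(B₂ 0 / B₁ 0), 0, by simp [n1, n2], by simp, fun z hz => ?_⟩
  rw [c1 z hz, c2 z hz]
  simp [this]

lemma mbu_final (a b c : ℂ) (ha : ‖a‖ < 1) (hb : ‖b‖ < 1) (hc : ‖c‖ = 1) :
    ∃ (τ : ℂ) (z₀ : ℂ), ‖τ‖ = 1 ∧ ‖z₀‖ < 1 ∧ ∀ w v : ℂ, ‖w‖ < 1 → ‖v‖ < 1 →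
      (b - v) / (1 - (starRingEnd ℂ) b * v) = c * ((a - w) / (1 - (starRingEnd ℂ) a * w)) →
      v = τ * (z₀ - w) / (1 - (starRingEnd ℂ) z₀ * w) := by
  have hcc : c * (starRingEnd ℂ) c = 1 := by
    rw [Complex.mul_conj, Complex.normSq_eq_norm_sq, hc]; simp
  have hca : ‖c * a‖ < 1 := by rw [norm_mul, hc, one_mul]; exact ha
  have hD : 1 - (starRingEnd ℂ) b * (c * a) ≠ 0 := mbu_den hb hca.le
  have hc0 : c ≠ 0 := by intro h; simp [h] at hc
  have hE' : c - b * (starRingEnd ℂ) a = c * (starRingEnd ℂ) (1 - (starRingEnd ℂ) b * (c * a)) := by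
    simp
    linear_combination b * (starRingEnd ℂ) a * hcc
  have hnE : ‖c - b * (starRingEnd ℂ) a‖ = ‖1 - (starRingEnd ℂ) b * (c * a)‖ := by
    rw [hE', norm_mul, hc, one_mul, RCLike.norm_conj]
  have hE : c - b * (starRingEnd ℂ) a ≠ 0 := by
    rw [← norm_ne_zero_iff, hnE, norm_ne_zero_iff]; exact hD
  have hDc : (starRingEnd ℂ) (1 - (starRingEnd ℂ) b * (c * a)) ≠ 0 :=
    (map_ne_zero _).2 hD
  have hz : (starRingEnd ℂ) ((c * a - b) / (c - b * (starRingEnd ℂ) a)) =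
      ((starRingEnd ℂ) a - (starRingEnd ℂ) b * c) / (1 - (starRingEnd ℂ) b * (c * a)) := by
    have hEc : (starRingEnd ℂ) (c - b * (starRingEnd ℂ) a) ≠ 0 :=
      (map_ne_zero _).2 hE
    rw [map_div₀, div_eq_div_iff hEc hD]
    simp only [map_sub, map_mul, Complex.conj_conj]
    linear_combination ((starRingEnd ℂ) b - a * (starRingEnd ℂ) a * (starRingEnd ℂ) b) * hcc
  have hz1 : ‖(c * a - b) / (c - b * (starRingEnd ℂ) a)‖ < 1 := by
    rw [norm_div, hnE, div_lt_one (norm_pos_iff.2 hD), norm_sub_rev]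
    have := mbu_id b (c * a)
    have h1 : 0 < (1 - ‖b‖ ^ 2) * (1 - ‖c * a‖ ^ 2) :=
      mul_pos (by nlinarith [norm_nonneg b]) (by nlinarith [norm_nonneg (c * a)])
    exact lt_of_pow_lt_pow_left₀ 2 (norm_nonneg _) (by linarith)
  refine ⟨-((c - b * (starRingEnd ℂ) a) / (1 - (starRingEnd ℂ) b * (c * a))),
    (c * a - b) / (c - b * (starRingEnd ℂ) a), ?_, hz1, ?_⟩
  · rw [norm_neg, norm_div, hnE, div_self (norm_ne_zero_iff.2 hD)]
  · intro w v hw hv h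
    have hden := mbu_den hz1 hw.le
    rw [hz] at hden ⊢
    have hw' := mbu_den ha hw.le
    have hv' := mbu_den hb hv.le
    have hden2 : (1 - (starRingEnd ℂ) b * (c * a)) -
        ((starRingEnd ℂ) a - (starRingEnd ℂ) b * c) * w ≠ 0 := by
      intro h0
      apply hden
      rw [div_mul_eq_mul_div, sub_eq_zero, eq_div_iff hD, one_mul]
      exact sub_eq_zero.1 h0
    rw [mul_div_assoc', div_eq_div_iff hv' hw'] at h
    have e1 : -((c - b * (starRingEnd ℂ) a) / (1 - (starRingEnd ℂ) b * (c * a))) *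
        ((c * a - b) / (c - b * (starRingEnd ℂ) a) - w) =
        (b - c * a + (c - b * (starRingEnd ℂ) a) * w) / (1 - (starRingEnd ℂ) b * (c * a)) := by
      field_simp
      ring
    have e2 : 1 - ((starRingEnd ℂ) a - (starRingEnd ℂ) b * c) /
        (1 - (starRingEnd ℂ) b * (c * a)) * w = ((1 - (starRingEnd ℂ) b * (c * a)) -
        ((starRingEnd ℂ) a - (starRingEnd ℂ) b * c) * w) / (1 - (starRingEnd ℂ) b * (c * a)) := by
      rw [sub_div (1 - (starRingEnd ℂ) b * (c * a)), div_self hD]; ring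
    rw [e1, e2, div_div_div_cancel_right₀ hD, eq_div_iff hden2]
    linear_combination -h

/-- **Uniqueness of maximal Blaschke products.** If `B₁` and `B₂` are maximal Blaschke
products whose derivatives have exactly the same zeros in the open unit disk, with
the same multiplicities, then `B₂ = T ∘ B₁` on the disk for some conformal
automorphism `T` of the disk. -/
theorem maximal_blaschke_uniqueness (B₁ B₂ : ℂ → ℂ)
    (hB₁ : IsMaximalBlaschke B₁) (hB₂ : IsMaximalBlaschke B₂)
    (hcrit : ∀ z ∈ Metric.ball (0 : ℂ) 1, vOrder (deriv B₁) z = vOrder (deriv B₂) z) :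
    ∃ (τ : ℂ) (z₀ : ℂ), ‖τ‖ = 1 ∧ ‖z₀‖ < 1 ∧
      ∀ z ∈ Metric.ball (0 : ℂ) 1,
        B₂ z = τ * (z₀ - B₁ z) / (1 - (starRingEnd ℂ) z₀ * B₁ z) := by
  have d1 := hB₁.1.1
  have d2 := hB₂.1.1
  have h0 : (0 : ℂ) ∈ Metric.ball (0 : ℂ) 1 := by simp
  by_cases c1 : ∀ z ∈ Metric.ball (0 : ℂ) 1, B₁ z = B₁ 0
  · exact mbu_both_const hB₁.1 hB₂.1 c1 (mbu_const_of_top d2 fun z hz =>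
      (hcrit z hz).symm.trans (mbu_order_top c1 z hz))
  by_cases c2 : ∀ z ∈ Metric.ball (0 : ℂ) 1, B₂ z = B₂ 0
  · exact absurd (mbu_const_of_top d1 fun z hz =>
      (hcrit z hz).trans (mbu_order_top c2 z hz)) c1
  have nc1 : ∃ z ∈ Metric.ball (0 : ℂ) 1, ∃ w ∈ Metric.ball (0 : ℂ) 1, B₁ z ≠ B₁ w := by
    push Not at c1
    obtain ⟨z, hz, h⟩ := c1
    exact ⟨z, hz, 0, h0, h⟩
  have nc2 : ∃ z ∈ Metric.ball (0 : ℂ) 1, ∃ w ∈ Metric.ball (0 : ℂ) 1, B₂ z ≠ B₂ w := by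
    push Not at c2
    obtain ⟨z, hz, h⟩ := c2
    exact ⟨z, hz, 0, h0, h⟩
  have l1 := mbu_norm_lt d1 (mbu_norm_le hB₁.1) nc1
  have l2 := mbu_norm_lt d2 (mbu_norm_le hB₂.1) nc2
  have heq : ∀ z ∈ Metric.ball (0 : ℂ) 1,
      ‖deriv B₂ z‖ * (1 - ‖B₁ z‖ ^ 2) = ‖deriv B₁ z‖ * (1 - ‖B₂ z‖ ^ 2) := fun z hz =>
    le_antisymm
      (hB₁.2 B₂ d2 (mbu_norm_le hB₂.1) nc2 (fun z hz => (hcrit z hz).le) z hz)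
      (hB₂.2 B₁ d1 (mbu_norm_le hB₁.1) nc1 (fun z hz => (hcrit z hz).ge) z hz)
  obtain ⟨p, hp, hp'⟩ : ∃ p ∈ Metric.ball (0 : ℂ) 1, deriv B₁ p ≠ 0 := by
    by_contra h
    push Not at h
    exact c1 (mbu_const_of_deriv d1 h)
  set f : ℂ → ℂ := fun x => (B₁ p - B₁ x) / (1 - (starRingEnd ℂ) (B₁ p) * B₁ x) with hf
  set g : ℂ → ℂ := fun x => (B₂ p - B₂ x) / (1 - (starRingEnd ℂ) (B₂ p) * B₂ x) with hg
  have df : DifferentiableOn ℂ f (Metric.ball (0 : ℂ) 1) := fun z hz =>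
    (((d1 z hz).const_sub _).fun_div (((d1 z hz).const_mul _).const_sub 1)
      (mbu_den (l1 p hp) (l1 z hz).le)).differentiableWithinAt
  have dg : DifferentiableOn ℂ g (Metric.ball (0 : ℂ) 1) := fun z hz =>
    (((d2 z hz).const_sub _).fun_div (((d2 z hz).const_mul _).const_sub 1)
      (mbu_den (l2 p hp) (l2 z hz).le)).differentiableWithinAt
  have af := df.analyticOnNhd Metric.isOpen_ball
  have ag := dg.analyticOnNhd Metric.isOpen_ball
  obtain ⟨c, hc, hev⟩ := mbu_local f g p (af p hp) (ag p hp) (by simp [hf]) (by simp [hg])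
    (by
      obtain ⟨K, hK, e, -⟩ := mbu_deriv (d1 p hp) (l1 p hp) (l1 p hp)
      rw [← norm_ne_zero_iff, hf, e]
      exact mul_ne_zero (norm_ne_zero_iff.2 hp') hK.ne')
    (by
      filter_upwards [Metric.isOpen_ball.mem_nhds hp] with z hz
      obtain ⟨K, hK, e1, e2⟩ := mbu_deriv (d1 z hz) (l1 p hp) (l1 z hz)
      obtain ⟨L, hL, e3, e4⟩ := mbu_deriv (d2 z hz) (l2 p hp) (l2 z hz)
      rw [hf, hg, e1, e2, e3, e4]
      linear_combination K * L * heq z hz)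
  have hall : Set.EqOn g (fun z => c * f z) (Metric.ball (0 : ℂ) 1) :=
    ag.eqOn_of_preconnected_of_eventuallyEq (analyticOnNhd_const.mul af)
      (convex_ball (0 : ℂ) 1).isPreconnected hp hev
  obtain ⟨τ, z₀, hτ, hz₀, hfin⟩ := mbu_final (B₁ p) (B₂ p) c (l1 p hp) (l2 p hp) hc
  exact ⟨τ, z₀, hτ, hz₀, fun z hz => hfin _ _ (l1 z hz) (l2 z hz) (hall hz)⟩
end

section
/- (Bergman zero sets are critical sets) Let φ : 𝔻 → ℂ be a holomorphic function, not identically zero, belonging to the Bergman space A²₁ (i.e. ∬_𝔻 (1 − |z|²) |φ(z)|² dx dy < ∞). Then there exists a nonconstant holomorphic function f from 𝔻 into the closed unit disk such that for every z ∈ 𝔻 the order of vanishing of f' at z equals the order of vanishing of φ at z. -/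
open Metric Filter MeasureTheory

section

open scoped Topology ComplexConjugate

/-- A function of the form `Re A + E` with `A` holomorphic and `E` strictly positive off `z0`
has no local maximum at `z0`. -/
lemma no_local_max (A : ℂ → ℂ) (z0 : ℂ) (hA : ∀ᶠ z in 𝓝 z0, DifferentiableAt ℂ A z)
    (E : ℂ → ℝ) (hE : ∀ᶠ z in 𝓝[≠] z0, 0 < E z) (hE0 : E z0 = 0) :
    ¬ IsLocalMax (fun z => (A z).re + E z) z0 := by
  intro hmax
  have hE' : ∀ᶠ z in 𝓝 z0, 0 ≤ E z := by
    rw [eventually_nhdsWithin_iff] at hE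
    filter_upwards [hE] with z hz
    by_cases h : z = z0
    · simp [h, hE0]
    · exact (hz h).le
  have h1 : IsLocalMax (norm ∘ fun z => Complex.exp (A z)) z0 := by
    filter_upwards [hmax, hE'] with z hz hz'
    simp only [Function.comp, Complex.norm_exp, Real.exp_le_exp]
    simp only [hE0] at hz
    linarith
  have h2 := Complex.eventually_eq_of_isLocalMax_norm (hA.mono fun z hz => hz.cexp) h1
  have h3 : ∀ᶠ z in 𝓝[≠] z0, False := by
    filter_upwards [hE, nhdsWithin_le_nhds h2, nhdsWithin_le_nhds hmax] with z a b c
    have := congrArg norm b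
    simp only [Complex.norm_exp, Real.exp_eq_exp] at this
    simp only [hE0] at c
    linarith
  exact (h3.exists).elim fun _ h => h

/-- Multiplicative version. -/
lemma no_local_max_mul (A : ℂ → ℂ) (z0 : ℂ) (hA : ∀ᶠ z in 𝓝 z0, DifferentiableAt ℂ A z)
    (hA0 : A z0 ≠ 0)
    (E : ℂ → ℝ) (hE : ∀ᶠ z in 𝓝[≠] z0, 1 < E z) (hE0 : E z0 = 1) :
    ¬ IsLocalMax (fun z => ‖A z‖ * E z) z0 := by
  intro hmax
  have hE' : ∀ᶠ z in 𝓝 z0, 1 ≤ E z := by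
    rw [eventually_nhdsWithin_iff] at hE
    filter_upwards [hE] with z hz
    by_cases h : z = z0
    · simp [h, hE0]
    · exact (hz h).le
  have h1 : IsLocalMax (norm ∘ A) z0 := by
    filter_upwards [hmax, hE'] with z hz hz'
    simp only [Function.comp]
    simp only [hE0] at hz
    nlinarith [norm_nonneg (A z)]
  have h2 := Complex.eventually_eq_of_isLocalMax_norm hA h1
  have h3 : ∀ᶠ z in 𝓝[≠] z0, False := by
    filter_upwards [hE, nhdsWithin_le_nhds h2, nhdsWithin_le_nhds hmax] with z a b c
    simp only [hE0, b] at c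
    have := norm_pos_iff.2 hA0
    nlinarith
  exact (h3.exists).elim fun _ h => h

lemma eventually_const_of_re_zero (k : ℂ → ℂ) (z0 : ℂ) (hk : AnalyticAt ℂ k z0)
    (h : ∀ᶠ z in 𝓝 z0, (k z).re = 0) : ∀ᶠ z in 𝓝 z0, k z = k z0 := by
  rcases hk.eventually_constant_or_nhds_le_map_nhds with h1 | h1
  · exact h1
  · exfalso
    have h2 : ∀ᶠ w in 𝓝 (k z0), w.re = 0 := h1 (Filter.mem_map.2 h)
    have h3 : Tendsto (fun t : ℝ => k z0 + (t : ℂ)) (𝓝[≠] 0) (𝓝 (k z0)) := by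
      have : Tendsto (fun t : ℝ => k z0 + (t : ℂ)) (𝓝 0) (𝓝 (k z0 + ((0:ℝ):ℂ))) :=
        Continuous.tendsto (by fun_prop) 0
      simp only [Complex.ofReal_zero, add_zero] at this
      exact this.mono_left nhdsWithin_le_nhds
    have h4 := (h3.eventually h2)
    have h5 : ∀ᶠ t : ℝ in 𝓝[≠] 0, False := by
      filter_upwards [h4, self_mem_nhdsWithin] with t ht ht'
      have h0 := h.self_of_nhds
      simp [h0] at ht
      exact ht' ht
    exact (h5.exists).elim fun _ h => h

/-- The local step: no interior positive maximum for the linearised curvature equation. -/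
lemma lin_no_max (f s m : ℂ → ℂ) (z0 : ℂ) (ε M : ℝ) (hε : 0 < ε)
    (hf : AnalyticAt ℂ f z0) (hs : AnalyticAt ℂ s z0) (hm : AnalyticAt ℂ m z0)
    (hf1 : ‖f z0‖ < 1)
    (hode : deriv m z0 = f z0 * deriv s z0 - deriv f z0 * s z0)
    (hM : (conj (f z0) * m z0 - s z0).re / (1 - ‖f z0‖ ^ 2) + ε * ‖z0‖ ^ 2 = M)
    (hpos : 0 < (conj (f z0) * m z0 - s z0).re / (1 - ‖f z0‖ ^ 2))
    (hmax : ∀ᶠ z in 𝓝 z0, (conj (f z) * m z - s z).re / (1 - ‖f z‖ ^ 2) + ε * ‖z‖ ^ 2 ≤ M) :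
    False := by
  set a := f z0 with ha
  have hD : (1 : ℂ) - conj a * a ≠ 0 := by
    rw [← Complex.normSq_eq_conj_mul_self, Complex.normSq_eq_norm_sq]
    norm_cast
    nlinarith [norm_nonneg a]
  set τ : ℂ → ℂ := fun z => (f z - a) / (1 - conj a * f z) with hτ
  set S : ℂ → ℂ := fun z => (s z - conj a * m z) / (1 - conj a * f z) with hS
  set K : ℂ → ℂ := fun z => (m z - a * s z) / (1 - conj a * f z) with hK
  have haτ : AnalyticAt ℂ τ z0 := by
    apply AnalyticAt.div <;> first | fun_prop | exact hD
  have haS : AnalyticAt ℂ S z0 := by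
    apply AnalyticAt.div <;> first | fun_prop | exact hD
  have haK : AnalyticAt ℂ K z0 := by
    apply AnalyticAt.div <;> first | fun_prop | exact hD
  have hτ0 : τ z0 = 0 := by simp [hτ, ← ha]
  have hdτ : HasDerivAt τ (deriv f z0 / (1 - conj a * a)) z0 := by
    have h1 := hf.differentiableAt.hasDerivAt
    have := (h1.sub_const a).div ((h1.const_mul (conj a)).const_sub 1) hD
    refine this.congr_deriv ?_
    rw [← ha]
    field_simp
    ring
  have hdK : HasDerivAt K (-(deriv f z0 / (1 - conj a * a)) * S z0) z0 := by
    have h1 := hf.differentiableAt.hasDerivAt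
    have h2 := hs.differentiableAt.hasDerivAt
    have h3 := hm.differentiableAt.hasDerivAt
    have := (h3.sub (h2.const_mul a)).div ((h1.const_mul (conj a)).const_sub 1) hD
    refine this.congr_deriv ?_
    simp only [hS, hode, ← ha]
    field_simp
    simp only [Pi.sub_apply]
    ring
  -- the transformed expression
  have key : ∀ᶠ z in 𝓝 z0, (conj (f z) * m z - s z).re / (1 - ‖f z‖ ^ 2) =
      (conj (τ z) * K z - S z).re / (1 - ‖τ z‖ ^ 2) ∧ 0 < 1 - ‖τ z‖ ^ 2 := by
    have c1 : ∀ᶠ z in 𝓝 z0, ‖f z‖ < 1 := hf.continuousAt.norm.eventually_lt_const hf1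
    filter_upwards [c1] with z hz
    have ha1 : 0 < 1 - ‖a‖ ^ 2 := by nlinarith [norm_nonneg a]
    have hz1 : 0 < 1 - ‖f z‖ ^ 2 := by nlinarith [norm_nonneg (f z)]
    have hne : (1 : ℂ) - conj a * f z ≠ 0 := by
      intro h
      have h' : conj a * f z = 1 := by linear_combination -h
      have := congrArg norm h'
      simp only [norm_mul, RCLike.norm_conj, norm_one] at this
      nlinarith [norm_nonneg a, norm_nonneg (f z)]
    have hp : 0 < ‖(1 : ℂ) - conj a * f z‖ ^ 2 := by positivity
    have e1 : 1 - ‖τ z‖ ^ 2 = (1 - ‖a‖ ^ 2) * (1 - ‖f z‖ ^ 2) / ‖(1 : ℂ) - conj a * f z‖ ^ 2 := by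
      simp only [hτ, norm_div, div_pow]
      rw [eq_div_iff hp.ne']
      rw [sub_mul, div_mul_cancel₀ _ hp.ne']
      simp only [← Complex.normSq_eq_norm_sq, Complex.normSq_apply]
      simp
      ring
    have e2 : (conj (τ z) * K z - S z).re =
      (1 - ‖a‖ ^ 2) * (conj (f z) * m z - s z).re / ‖(1 : ℂ) - conj a * f z‖ ^ 2 := by
      have hne' : (1 : ℂ) - a * conj (f z) ≠ 0 := by
        intro h
        apply hne
        have := congrArg conj h
        simpa using this
      have : conj (τ z) * K z - S z =
        ((conj (f z) - conj a) * (m z - a * s z) - (s z - conj a * m z) * (1 - a * conj (f z))) /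
          ((‖(1 : ℂ) - conj a * f z‖ ^ 2 : ℝ) : ℂ) := by
        have hh : ((‖(1 : ℂ) - conj a * f z‖ ^ 2 : ℝ) : ℂ) = (1 - conj a * f z) * (1 - a * conj (f z)) := by
          rw [← Complex.normSq_eq_norm_sq, Complex.normSq_eq_conj_mul_self]
          simp
          ring
        rw [hh]
        simp only [hτ, hK, hS, map_div₀, map_sub, map_mul, map_one, Complex.conj_conj]
        have hne'' : (1 : ℂ) - conj (f z) * a ≠ 0 := by rwa [mul_comm (conj (f z))]
        field_simp
      rw [this, Complex.div_ofReal_re]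
      congr 1
      rw [← Complex.normSq_eq_norm_sq, Complex.normSq_apply]
      simp
      ring
    refine ⟨?_, ?_⟩
    · rw [e1, e2]
      field_simp
    · rw [e1]; positivity
  have k0 := key.self_of_nhds
  rw [k0.1] at hM hpos
  simp only [hτ0, map_zero, zero_mul, norm_zero, zero_sub, Complex.neg_re] at hM hpos
  norm_num at hM hpos
  -- the decomposition
  set A : ℂ → ℂ := fun z => conj (K z0) * τ z - S z - M + ε * (‖z0‖ ^ 2 + 2 * conj z0 * (z - z0)) with hA
  set E : ℂ → ℝ := fun z => (conj (τ z) * (K z - K z0)).re + M * ‖τ z‖ ^ 2 + ε * ‖z - z0‖ ^ 2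
    - ε * ‖z‖ ^ 2 * ‖τ z‖ ^ 2 with hE
  refine no_local_max A z0 ?_ E ?_ (by simp [hE, hτ0]) ?_
  · filter_upwards [haτ.eventually_analyticAt, haS.eventually_analyticAt] with z h1 h2
    have := h1.differentiableAt
    have := h2.differentiableAt
    fun_prop
  · have hT := continuousAt_dslope_same.2 haτ.differentiableAt
    have hU := continuousAt_dslope_same.2 haK.differentiableAt
    set G : ℂ → ℝ := fun z => (conj (dslope τ z0 z) * dslope K z0 z).re + M * ‖dslope τ z0 z‖ ^ 2
      + ε - ε * ‖z‖ ^ 2 * ‖dslope τ z0 z‖ ^ 2 with hG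
    have hGc : ContinuousAt G z0 := by
      have h1 : ContinuousAt (fun z => conj (dslope τ z0 z) * dslope K z0 z) z0 :=
        (Complex.continuous_conj.continuousAt.comp hT).mul hU
      have h2 := Complex.continuous_re.continuousAt.comp h1
      have h3 := (hT.norm.pow 2)
      exact ((h2.add (h3.const_mul M)).add_const ε).sub
        (((continuous_norm.continuousAt.pow 2).const_mul ε).mul h3)
    have hG0 : 0 < G z0 := by
      simp only [hG, dslope_same, hdτ.deriv, hdK.deriv]
      set t := deriv f z0 / (1 - conj a * a)
      have : (conj t * (-t * S z0)).re = - (‖t‖ ^ 2 * (S z0).re) := by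
        have : conj t * (-t * S z0) = -(((‖t‖ ^ 2 : ℝ) : ℂ) * S z0) := by
          rw [← Complex.normSq_eq_norm_sq, Complex.normSq_eq_conj_mul_self]
          ring
        rw [this, Complex.neg_re, Complex.re_ofReal_mul]
      rw [this]
      have h2 : 0 ≤ ‖t‖ ^ 2 := by positivity
      nlinarith [mul_nonneg h2 (neg_nonneg.2 hpos.le)]
    have := hGc.eventually (lt_mem_nhds hG0)
    filter_upwards [nhdsWithin_le_nhds this, self_mem_nhdsWithin] with z hz hne
    have hd : 0 < ‖z - z0‖ ^ 2 := by
      have : z - z0 ≠ 0 := sub_ne_zero.2 hne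
      positivity
    have e1 : τ z = (z - z0) * dslope τ z0 z := by
      have := sub_smul_dslope τ z0 z
      rw [hτ0, sub_zero] at this
      exact this.symm
    have e2 : K z - K z0 = (z - z0) * dslope K z0 z := (sub_smul_dslope K z0 z).symm
    have : E z = ‖z - z0‖ ^ 2 * G z := by
      simp only [hE, hG]
      rw [e2, e1]
      have : (conj ((z - z0) * dslope τ z0 z) * ((z - z0) * dslope K z0 z)) =
        ((‖z - z0‖ ^ 2 : ℝ) : ℂ) * (conj (dslope τ z0 z) * dslope K z0 z) := by
        rw [← Complex.normSq_eq_norm_sq, Complex.normSq_eq_conj_mul_self]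
        simp only [map_mul]
        ring
      rw [this, Complex.re_ofReal_mul, norm_mul]
      ring
    rw [this]
    positivity
  · have expand : ∀ z, (A z).re + E z = (conj (τ z) * K z - S z).re
        - (M - ε * ‖z‖ ^ 2) * (1 - ‖τ z‖ ^ 2) := by
      intro z
      simp only [hA, hE]
      simp only [← Complex.normSq_eq_norm_sq, Complex.normSq_apply]
      simp [← Complex.ofReal_pow, ← Complex.normSq_eq_norm_sq, Complex.normSq_apply]
      ring
    filter_upwards [hmax, key] with z h1 h2
    rw [expand, expand, hτ0]
    simp only [map_zero, zero_mul, norm_zero, zero_sub, Complex.neg_re]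
    rw [h2.1] at h1
    have h3 : (conj (τ z) * K z - S z).re / (1 - ‖τ z‖ ^ 2) ≤ M - ε * ‖z‖ ^ 2 := by linarith
    rw [div_le_iff₀ h2.2] at h3
    rw [show (1 - (0 : ℝ) ^ 2) = 1 by norm_num]
    linarith

lemma lin_boundary (f s m : ℂ → ℂ) (ζ : ℂ) (hζ : ‖ζ‖ = 1)
    (hf : AnalyticAt ℂ f ζ) (hs : AnalyticAt ℂ s ζ) (hm : AnalyticAt ℂ m ζ)
    (hfz : ∀ z, ‖z‖ ≤ 1 → ‖f z‖ ≤ ‖z‖)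
    (hcirc : ∀ z, ‖z‖ = 1 → conj (f z) * m z = conj (s z))
    (hfc : ‖f ζ‖ = 1)
    (hode : deriv m ζ = f ζ * deriv s ζ - deriv f ζ * s ζ) :
    ContinuousWithinAt (fun z => (conj (f z) * m z - s z).re / (1 - ‖f z‖ ^ 2)) (closedBall 0 1) ζ := by
  set W : ℂ → ℝ := fun z => (conj (f z) * m z - s z).re with hW
  have hW0 : ∀ z, ‖z‖ = 1 → W z = 0 := by
    intro z hz
    simp only [hW, hcirc z hz, Complex.sub_re, Complex.conj_re, sub_self]
  have hstrict : HasStrictFDerivAt W (0 : ℂ →L[ℝ] ℝ) ζ := by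
    have h1 := (hf.hasStrictDerivAt.hasStrictFDerivAt.restrictScalars ℝ)
    have h2 := (hm.hasStrictDerivAt.hasStrictFDerivAt.restrictScalars ℝ)
    have h3 := (hs.hasStrictDerivAt.hasStrictFDerivAt.restrictScalars ℝ)
    have h4 := (Complex.conjCLE.toContinuousLinearMap.hasStrictFDerivAt (x := f ζ)).comp ζ h1
    have h5 := (h4.mul h2).sub h3
    have h6 := (Complex.reCLM.hasStrictFDerivAt (x := conj (f ζ) * m ζ - s ζ)).comp ζ h5
    refine h6.congr_fderiv ?_
    ext v
    have hms : conj (m ζ) = conj (f ζ) * s ζ := by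
      have := congrArg conj (hcirc ζ hζ)
      simp only [map_mul, Complex.conj_conj] at this
      have h0 : conj (f ζ) * f ζ = 1 := by
        rw [← Complex.normSq_eq_conj_mul_self, Complex.normSq_eq_norm_sq, hfc]; norm_num
      rw [← this]
      linear_combination (-conj (m ζ)) * h0
    have h0 : conj (f ζ) * f ζ = 1 := by
      rw [← Complex.normSq_eq_conj_mul_self, Complex.normSq_eq_norm_sq, hfc]; norm_num
    have e : ((conj (f ζ) * (v * deriv m ζ) + m ζ * conj (v * deriv f ζ)) - v * deriv s ζ).re = 0 := by
      have e1 : (m ζ * conj (v * deriv f ζ)).re = (conj (m ζ) * (v * deriv f ζ)).re := by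
        rw [← Complex.conj_re]; simp
      rw [Complex.sub_re, Complex.add_re, e1, ← Complex.add_re, ← Complex.sub_re, hms, hode]
      have : conj (f ζ) * (v * (f ζ * deriv s ζ - deriv f ζ * s ζ)) + conj (f ζ) * s ζ * (v * deriv f ζ) - v * deriv s ζ = 0 := by
        linear_combination (v * deriv s ζ) * h0
      rw [this]; simp
    simp at e ⊢
    linarith
  have hu0 : (W ζ) / (1 - ‖f ζ‖ ^ 2) = 0 := by rw [hW0 ζ hζ]; simp
  rw [ContinuousWithinAt]
  change Tendsto (fun z => W z / (1 - ‖f z‖ ^ 2)) _ (𝓝 (W ζ / (1 - ‖f ζ‖ ^ 2)))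
  rw [hu0, Metric.tendsto_nhds]
  intro δ hδ
  have hs2 := hstrict.isLittleO.def (half_pos hδ)
  have hζ0 : ζ ≠ 0 := by intro h; simp [h] at hζ
  have hpair : Tendsto (fun z : ℂ => (z, z / (‖z‖ : ℂ))) (𝓝 ζ) (𝓝 (ζ, ζ)) := by
    have h1 : ContinuousAt (fun z : ℂ => z / (‖z‖ : ℂ)) ζ := by
      apply ContinuousAt.div
      · exact continuousAt_id
      · exact (Complex.continuous_ofReal.comp continuous_norm).continuousAt
      · simp [hζ0]
    have h2 : Tendsto (fun z : ℂ => z / (‖z‖ : ℂ)) (𝓝 ζ) (𝓝 ζ) := by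
      have := h1.tendsto
      simpa [hζ] using this
    exact tendsto_id.prodMk_nhds h2
  have hev := hpair.eventually hs2
  have hne : ∀ᶠ z : ℂ in 𝓝 ζ, z ≠ 0 := isOpen_ne.mem_nhds hζ0
  filter_upwards [nhdsWithin_le_nhds hev, nhdsWithin_le_nhds hne, self_mem_nhdsWithin] with z h1 h2 h3
  have hz1 : ‖z‖ ≤ 1 := by simpa using h3
  have hzp : 0 < ‖z‖ := norm_pos_iff.2 h2
  have hb : ‖z / (‖z‖ : ℂ)‖ = 1 := by simp [hzp.ne']
  simp only [ContinuousLinearMap.zero_apply, sub_zero, hW0 _ hb] at h1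
  have hd : ‖z - z / (‖z‖ : ℂ)‖ = 1 - ‖z‖ := by
    have : z - z / (‖z‖ : ℂ) = ((‖z‖ - 1 : ℝ) : ℂ) * (z / (‖z‖ : ℂ)) := by
      have : (‖z‖ : ℂ) ≠ 0 := by exact_mod_cast hzp.ne'
      push_cast
      field_simp
    rw [this, norm_mul, hb, Complex.norm_real, Real.norm_eq_abs, abs_of_nonpos (by linarith)]
    ring
  rw [hd] at h1
  rw [dist_zero_right]
  rcases hz1.lt_or_eq with hlt | heq
  · have hfb := hfz z hz1
    have hden : 1 - ‖z‖ ≤ 1 - ‖f z‖ ^ 2 := by nlinarith [norm_nonneg (f z)]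
    have hden0 : 0 < 1 - ‖f z‖ ^ 2 := by linarith
    rw [norm_div, Real.norm_of_nonneg hden0.le, div_lt_iff₀ hden0]
    nlinarith
  · rw [hW0 z heq]; simpa using hδ

/-- Data of the linearised problem. -/
structure LinData (f s m : ℂ → ℂ) : Prop where
  hf : ∀ z, ‖z‖ ≤ 1 → AnalyticAt ℂ f z
  hs : ∀ z, ‖z‖ ≤ 1 → AnalyticAt ℂ s z
  hm : ∀ z, ‖z‖ ≤ 1 → AnalyticAt ℂ m z
  hfz : ∀ z, ‖z‖ ≤ 1 → ‖f z‖ ≤ ‖z‖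
  hfc : ∀ z, ‖z‖ = 1 → ‖f z‖ = 1
  hcirc : ∀ z, ‖z‖ = 1 → conj (f z) * m z = conj (s z)
  hode : ∀ z, ‖z‖ ≤ 1 → deriv m z = f z * deriv s z - deriv f z * s z

lemma lin_nonpos {f s m : ℂ → ℂ} (h : LinData f s m) (z1 : ℂ) (hz1 : ‖z1‖ < 1) :
    (conj (f z1) * m z1 - s z1).re ≤ 0 := by
  by_contra hcon
  push Not at hcon
  set u : ℂ → ℝ := fun z => (conj (f z) * m z - s z).re / (1 - ‖f z‖ ^ 2) with hu
  have hden : ∀ z, ‖z‖ < 1 → 0 < 1 - ‖f z‖ ^ 2 := by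
    intro z hz
    have := h.hfz z hz.le
    nlinarith [norm_nonneg (f z)]
  have huc : ContinuousOn u (closedBall 0 1) := by
    intro z hz
    have hz' : ‖z‖ ≤ 1 := by simpa using hz
    rcases hz'.lt_or_eq with hlt | heq
    · apply ContinuousAt.continuousWithinAt
      have c1 := (h.hf z hz').continuousAt
      have c2 := (h.hm z hz').continuousAt
      have c3 := (h.hs z hz').continuousAt
      apply ContinuousAt.div
      · exact Complex.continuous_re.continuousAt.comp
          (((Complex.continuous_conj.continuousAt.comp c1).mul c2).sub c3)
      · exact continuousAt_const.sub (c1.norm.pow 2)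
      · exact (hden z hlt).ne'
    · exact lin_boundary f s m z heq (h.hf z hz') (h.hs z hz') (h.hm z hz') h.hfz h.hcirc
        (h.hfc z heq) (h.hode z hz')
  have hM1 : 0 < u z1 := div_pos hcon (hden z1 hz1)
  set ε := u z1 / 2 with hε
  have hε0 : 0 < ε := by positivity
  obtain ⟨z0, hz0, hmax⟩ := (isCompact_closedBall (0 : ℂ) 1).exists_isMaxOn
    (f := fun z => u z + ε * ‖z‖ ^ 2) ⟨0, by simp⟩
    (huc.add (by fun_prop))
  have hg1 := hmax (show z1 ∈ closedBall (0:ℂ) 1 by simpa using hz1.le)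
  simp only [Set.mem_setOf_eq] at hg1
  have hz0' : ‖z0‖ ≤ 1 := by simpa using hz0
  have hsq : ε * ‖z1‖ ^ 2 ≥ 0 := by positivity
  have hz0lt : ‖z0‖ < 1 := by
    rcases hz0'.lt_or_eq with hlt | heq
    · exact hlt
    · exfalso
      have : u z0 = 0 := by simp [hu, h.hfc z0 heq]
      rw [this, heq] at hg1
      linarith
  refine lin_no_max f s m z0 ε (u z0 + ε * ‖z0‖ ^ 2) hε0 (h.hf z0 hz0') (h.hs z0 hz0') (h.hm z0 hz0')
    (lt_of_le_of_lt (h.hfz z0 hz0') hz0lt) (h.hode z0 hz0') rfl ?_ ?_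
  · change 0 < u z0
    have : ε * ‖z0‖ ^ 2 ≤ ε := by
      have : ‖z0‖ ^ 2 ≤ 1 := by nlinarith [norm_nonneg z0]
      nlinarith
    linarith
  · have : closedBall (0:ℂ) 1 ∈ 𝓝 z0 :=
      mem_of_superset (isOpen_ball.mem_nhds (by simpa using hz0lt)) ball_subset_closedBall
    filter_upwards [this] with z hz
    exact hmax hz

lemma lin_zero {f s m : ℂ → ℂ} (h : LinData f s m) (z1 : ℂ) (hz1 : ‖z1‖ < 1) :
    (conj (f z1) * m z1 - s z1).re = 0 := by
  apply le_antisymm (lin_nonpos h z1 hz1)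
  have h' : LinData f (fun z => - s z) (fun z => - m z) :=
    { hf := h.hf
      hs := fun z hz => (h.hs z hz).neg
      hm := fun z hz => (h.hm z hz).neg
      hfz := h.hfz
      hfc := h.hfc
      hcirc := fun z hz => by
        rw [map_neg, ← h.hcirc z hz]; ring
      hode := fun z hz => by
        simp only [deriv.fun_neg]
        rw [h.hode z hz]; ring }
  have := lin_nonpos h' z1 hz1
  simp at this ⊢
  linarith

lemma lin_deriv_zero {f s m : ℂ → ℂ} (h : LinData f s m) (z0 : ℂ) (hz0 : ‖z0‖ < 1) :
    (conj (deriv f z0) * deriv m z0).re = 0 := by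
  have haf := h.hf z0 hz0.le
  have ham := h.hm z0 hz0.le
  have has := h.hs z0 hz0.le
  have hnhd : ∀ᶠ z in 𝓝 z0, ‖z‖ < 1 := continuous_norm.continuousAt.eventually_lt_const hz0
  set A : ℂ → ℂ := fun z => conj (f z0) * m z + conj (m z0) * (f z - f z0) - s z with hA
  have hAd : ∀ᶠ z in 𝓝 z0, DifferentiableAt ℂ A z := by
    filter_upwards [haf.eventually_analyticAt, ham.eventually_analyticAt,
      has.eventually_analyticAt] with z h1 h2 h3
    have := h1.differentiableAt
    have := h2.differentiableAt
    have := h3.differentiableAt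
    fun_prop
  set E : ℂ → ℝ := fun z => (conj (f z - f z0) * (m z - m z0)).re with hE
  have hsum : ∀ z, ‖z‖ < 1 → (A z).re + E z = 0 := by
    intro z hz
    rw [← lin_zero h z hz]
    simp [hA, hE]
    ring
  have hT := continuousAt_dslope_same.2 haf.differentiableAt
  have hU := continuousAt_dslope_same.2 ham.differentiableAt
  set G : ℂ → ℝ := fun z => (conj (dslope f z0 z) * dslope m z0 z).re with hG
  have hGc : ContinuousAt G z0 := Complex.continuous_re.continuousAt.comp
    ((Complex.continuous_conj.continuousAt.comp hT).mul hU)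
  have hG0 : G z0 = (conj (deriv f z0) * deriv m z0).re := by simp only [hG, dslope_same]
  have hEG : ∀ z, E z = ‖z - z0‖ ^ 2 * G z := by
    intro z
    simp only [hE, hG]
    rw [← sub_smul_dslope m z0 z, ← sub_smul_dslope f z0 z, smul_eq_mul, smul_eq_mul,
      ← Complex.re_ofReal_mul, ← Complex.normSq_eq_norm_sq, Complex.normSq_eq_conj_mul_self]
    simp only [map_mul]
    congr 1; ring
  have hE0 : E z0 = 0 := by simp [hE]
  rw [← hG0]
  have hpos : ∀ z ∈ ({z0}ᶜ : Set ℂ), 0 < ‖z - z0‖ ^ 2 := by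
    intro z hz
    have : z - z0 ≠ 0 := sub_ne_zero.2 hz
    positivity
  rcases lt_trichotomy (G z0) 0 with hlt | heq | hgt
  · exfalso
    refine no_local_max (fun z => - A z) z0 (hAd.mono fun z hz => hz.neg) (fun z => - E z) ?_ (by simp [hE0]) ?_
    · filter_upwards [nhdsWithin_le_nhds (hGc.eventually (gt_mem_nhds hlt)), self_mem_nhdsWithin] with z a b
      rw [hEG]
      nlinarith [hpos z b]
    · filter_upwards [hnhd] with z hz
      simp only [Complex.neg_re]
      linarith [hsum z hz, hsum z0 hz0]
  · exact heq
  · exfalso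
    refine no_local_max A z0 hAd E ?_ hE0 ?_
    · filter_upwards [nhdsWithin_le_nhds (hGc.eventually (lt_mem_nhds hgt)), self_mem_nhdsWithin] with z a b
      rw [hEG]
      exact mul_pos (hpos z b) a
    · filter_upwards [hnhd] with z hz
      linarith [hsum z hz, hsum z0 hz0]

/-- Infinitesimal rigidity. -/
theorem rigidity {f s m : ℂ → ℂ} (h : LinData f s m) (hm0 : m 0 = 0) (hs0 : (s 0).im = 0) :
    ∀ z ∈ ball (0 : ℂ) 1, s z = 0 := by
  have hf0 : f 0 = 0 := by simpa using h.hfz 0 (by simp)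
  have haf : AnalyticOnNhd ℂ f (ball 0 1) := fun z hz => h.hf z (by simpa using (mem_ball_zero_iff.1 hz).le)
  have ham : AnalyticOnNhd ℂ m (ball 0 1) := fun z hz => h.hm z (by simpa using (mem_ball_zero_iff.1 hz).le)
  have has : AnalyticOnNhd ℂ s (ball 0 1) := fun z hz => h.hs z (by simpa using (mem_ball_zero_iff.1 hz).le)
  have hconst : ∀ F : ℂ → ℂ, AnalyticOnNhd ℂ F (ball 0 1) → (∀ z ∈ ball (0:ℂ) 1, deriv F z = 0) →
      ∀ z ∈ ball (0:ℂ) 1, F z = F 0 := by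
    intro F hF hd z hz
    exact isOpen_ball.is_const_of_deriv_eq_zero (convex_ball (0:ℂ) 1).isPreconnected
      hF.differentiableOn (fun w hw => hd w hw) hz (by simp)
  obtain ⟨z1, hz1, hfz1⟩ : ∃ z ∈ ball (0:ℂ) 1, deriv f z ≠ 0 := by
    by_contra hcon
    push Not at hcon
    have hz := hconst f haf hcon
    have hcl : (1 : ℂ) ∈ closure (ball (0:ℂ) 1) := by
      rw [closure_ball _ one_ne_zero]; simp
    have hcont : ContinuousWithinAt f (ball 0 1) 1 := (h.hf 1 (by simp)).continuousAt.continuousWithinAt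
    have h2 : Tendsto f (𝓝[ball 0 1] 1) (𝓝 0) := by
      apply tendsto_const_nhds.congr'
      filter_upwards [self_mem_nhdsWithin] with z hz'
      rw [hz z hz', hf0]
    haveI : (𝓝[ball (0:ℂ) 1] 1).NeBot := mem_closure_iff_nhdsWithin_neBot.1 hcl
    have h3 := tendsto_nhds_unique hcont.tendsto h2
    have h4 := h.hfc 1 (by simp)
    rw [h3] at h4
    simp at h4
  have hz1' : ‖z1‖ < 1 := by simpa using hz1
  have hk : AnalyticAt ℂ (fun z => deriv m z / deriv f z) z1 :=
    (ham z1 hz1).deriv.div (haf z1 hz1).deriv hfz1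
  have hkre : ∀ᶠ z in 𝓝 z1, (deriv m z / deriv f z).re = 0 := by
    filter_upwards [isOpen_ball.mem_nhds hz1] with z hz
    have h1 := lin_deriv_zero h z (by simpa using hz)
    have : deriv m z / deriv f z = (((‖deriv f z‖ ^ 2)⁻¹ : ℝ) : ℂ) * (conj (deriv f z) * deriv m z) := by
      by_cases h0 : deriv f z = 0
      · simp [h0]
      · have h0' : conj (deriv f z) ≠ 0 := by simpa using h0
        rw [← Complex.normSq_eq_norm_sq, Complex.ofReal_inv, Complex.normSq_eq_conj_mul_self]
        field_simp
    rw [this, Complex.re_ofReal_mul, h1, mul_zero]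
  have hkc := eventually_const_of_re_zero _ z1 hk hkre
  set κ := deriv m z1 / deriv f z1 with hκ
  have hκre : κ.re = 0 := hkre.self_of_nhds
  have hev : ∀ᶠ z in 𝓝 z1, deriv m z = κ * deriv f z := by
    have hne : ∀ᶠ z in 𝓝 z1, deriv f z ≠ 0 := (haf z1 hz1).deriv.continuousAt.eventually_ne hfz1
    filter_upwards [hkc, hne] with z a b
    rw [div_eq_iff b] at a
    exact a
  have hall : Set.EqOn (deriv m) (fun z => κ * deriv f z) (ball 0 1) :=
    AnalyticOnNhd.eqOn_of_preconnected_of_eventuallyEq ham.deriv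
      (fun z hz => analyticAt_const.mul (haf.deriv z hz)) (convex_ball (0:ℂ) 1).isPreconnected hz1 hev
  have hmf : ∀ z ∈ ball (0:ℂ) 1, m z = κ * f z := by
    intro z hz
    have := hconst (fun z => m z - κ * f z) (fun w hw => (ham w hw).sub (analyticAt_const.mul (haf w hw))) ?_ z hz
    · simp only [hm0, hf0, mul_zero, sub_zero] at this
      exact sub_eq_zero.1 this
    · intro w hw
      have h1 := (ham w hw).differentiableAt
      have h2 := (haf w hw).differentiableAt
      rw [deriv_fun_sub h1 (h2.const_mul κ), deriv_const_mul κ h2, hall hw, sub_self]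
  have hsre : ∀ z ∈ ball (0:ℂ) 1, (s z).re = 0 := by
    intro z hz
    have h1 := lin_zero h z (by simpa using hz)
    rw [hmf z hz] at h1
    have : conj (f z) * (κ * f z) = ((‖f z‖ ^ 2 : ℝ) : ℂ) * κ := by
      rw [← Complex.normSq_eq_norm_sq, Complex.normSq_eq_conj_mul_self]; ring
    rw [this, Complex.sub_re, Complex.re_ofReal_mul, hκre] at h1
    linarith
  have h00 : (0:ℂ) ∈ ball (0:ℂ) 1 := by simp
  have hs00 : s 0 = 0 := Complex.ext (hsre 0 h00) hs0
  have hev2 := eventually_const_of_re_zero s 0 (has 0 h00) (by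
    filter_upwards [isOpen_ball.mem_nhds h00] with z hz using hsre z hz)
  exact has.eqOn_of_preconnected_of_eventuallyEq (g := fun _ => 0) (fun _ _ => analyticAt_const) (convex_ball (0:ℂ) 1).isPreconnected
    h00 (by filter_upwards [hev2] with z hz; rw [hz, hs00])

/-- Parameter space. -/
abbrev EE (n : ℕ) := ℝ × (Fin n → ℂ)

/-- Coefficients. -/
noncomputable def cf {n : ℕ} (x : EE n) : ℕ → ℂ
  | 0 => (x.1 : ℂ)
  | k + 1 => if h : k < n then x.2 ⟨k, h⟩ else 0

noncomputable def pol (n : ℕ) (c : ℕ → ℂ) (z : ℂ) : ℂ := ∑ k ∈ Finset.range (n + 1), c k * z ^ k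
noncomputable def rev (n : ℕ) (c : ℕ → ℂ) (z : ℂ) : ℂ :=
  ∑ k ∈ Finset.range (n + 1), conj (c k) * z ^ (n - k)
noncomputable def dpol (n : ℕ) (c : ℕ → ℂ) (z : ℂ) : ℂ :=
  ∑ k ∈ Finset.range (n + 1), c k * (k * z ^ (k - 1))
noncomputable def drev (n : ℕ) (c : ℕ → ℂ) (z : ℂ) : ℂ :=
  ∑ k ∈ Finset.range (n + 1), conj (c k) * ((n + 1 - k) * z ^ (n - k))
noncomputable def Sw (n : ℕ) (w : ℕ → ℕ → ℝ) (c d : ℕ → ℂ) (z : ℂ) : ℂ :=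
  ∑ j ∈ Finset.range (n + 1), ∑ k ∈ Finset.range (n + 1),
    (w j k : ℂ) * (c j * conj (d k)) * z ^ (n - k + j)
noncomputable def Lt (n : ℕ) (t : EE n) (z : ℂ) : ℂ :=
  (t.1 : ℂ) * z ^ n + ∑ m : Fin n, (t.2 m * z ^ (n + (m + 1)) + conj (t.2 m) * z ^ (n - (m + 1)))
noncomputable def Tw (n : ℕ) (w : ℕ → ℕ → ℝ) (c d : ℕ → ℂ) : EE n :=
  (∑ k ∈ Finset.range (n + 1), w k k * (c k * conj (d k) + d k * conj (c k)).re,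
   fun m => ∑ k ∈ Finset.range (n + 1), (w (k + (m + 1)) k : ℂ) *
      (c (k + (m + 1)) * conj (d k) + d (k + (m + 1)) * conj (c k)))

lemma diag_sum (n : ℕ) (F : ℕ → ℕ → ℂ) (hF1 : ∀ j k, n < j → F j k = 0)
    (hF2 : ∀ j k, n < k → F j k = 0) :
    ∑ j ∈ Finset.range (n + 1), ∑ k ∈ Finset.range (n + 1), F j k =
    ∑ k ∈ Finset.range (n + 1), F k k + ∑ m ∈ Finset.range n, ∑ k ∈ Finset.range (n + 1),
      (F (k + (m + 1)) k + F k (k + (m + 1))) := by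
  have key : ∀ (G : ℕ → ℂ), (∀ j, n < j → G j = 0) → ∀ k ∈ Finset.range (n + 1),
      ∑ m ∈ Finset.range n, G (k + (m + 1)) = ∑ j ∈ Finset.range (n + 1), if k < j then G j else 0 := by
    intro G hG k hk
    have hk' : k ≤ n := by simp at hk; omega
    rw [← Finset.sum_filter]
    have : (Finset.range (n + 1)).filter (fun j => k < j) = Finset.Ico (k + 1) (n + 1) := by
      ext j; simp; omega
    rw [this, Finset.sum_Ico_eq_sum_range]
    have h2 : Finset.range (n + 1 - (k + 1)) ⊆ Finset.range n := by
      intro a; simp; omega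
    rw [← Finset.sum_subset h2]
    · apply Finset.sum_congr rfl
      intro m _
      congr 1; omega
    · intro m _ hm
      apply hG
      simp at hm; omega
  rw [Finset.sum_comm (s := Finset.range n)]
  simp only [Finset.sum_add_distrib]
  rw [Finset.sum_congr rfl fun k hk => key (fun j => F j k) (fun j hj => hF1 j k hj) k hk]
  rw [Finset.sum_congr rfl fun k hk => key (fun j => F k j) (fun j hj => hF2 k j hj) k hk]
  rw [Finset.sum_comm (f := fun k j => if k < j then F j k else 0)]
  rw [← Finset.sum_add_distrib, ← Finset.sum_add_distrib]
  apply Finset.sum_congr rfl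
  intro j hj
  have : F j j = ∑ k ∈ Finset.range (n + 1), if k = j then F j k else 0 := by
    rw [Finset.sum_ite_eq' (Finset.range (n+1)) j (fun k => F j k), if_pos hj]
  rw [this, ← Finset.sum_add_distrib, ← Finset.sum_add_distrib]
  apply Finset.sum_congr rfl
  intro k _
  rcases lt_trichotomy k j with h | h | h
  · simp [h, h.ne, h.not_gt]
  · simp [h]
  · simp [h, h.ne', h.not_gt]

lemma Sw_add (n : ℕ) (w : ℕ → ℕ → ℝ) (hw : ∀ j k, w j k = w k j) (c d : ℕ → ℂ)
    (hc : ∀ k, n < k → c k = 0) (hd : ∀ k, n < k → d k = 0) (z : ℂ) :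
    Sw n w c d z + Sw n w d c z = Lt n (Tw n w c d) z := by
  simp only [Sw]
  rw [← Finset.sum_add_distrib]
  simp only [← Finset.sum_add_distrib]
  rw [diag_sum n]
  · simp only [Lt, Tw]
    congr 1
    · push_cast
      rw [Finset.sum_mul]
      apply Finset.sum_congr rfl
      intro k hk
      have : n - k + k = n := by simp at hk; omega
      rw [this]
      have : (((c k * conj (d k) + d k * conj (c k)).re : ℝ) : ℂ) = c k * conj (d k) + d k * conj (c k) := by
        apply Complex.conj_eq_iff_re.1
        simp; ring
      rw [this]; ring
    · rw [← Fin.sum_univ_eq_sum_range (fun m => ∑ k ∈ Finset.range (n + 1), _)]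
      apply Finset.sum_congr rfl
      intro m _
      rw [map_sum, Finset.sum_mul, Finset.sum_mul, ← Finset.sum_add_distrib]
      apply Finset.sum_congr rfl
      intro k hk
      have e1 : n - k + (k + ((m:ℕ) + 1)) = n + (m + 1) := by simp at hk; omega
      rw [e1]
      by_cases h : k + ((m:ℕ) + 1) ≤ n
      · have e2 : n - (k + ((m:ℕ) + 1)) + k = n - (m + 1) := by omega
        rw [e2, hw k]
        simp
        ring
      · rw [hc (k + ((m:ℕ)+1)) (by omega), hd (k + ((m:ℕ)+1)) (by omega)]
        simp
  · intro j k h; simp [hc j h, hd j h]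
  · intro j k h; simp [hc k h, hd k h]

lemma pol_mul_rev (n : ℕ) (c d : ℕ → ℂ) (z : ℂ) :
    pol n c z * rev n d z = Sw n (fun _ _ => 1) c d z := by
  simp only [pol, rev, Sw, Finset.sum_mul_sum]
  refine Finset.sum_congr rfl fun j _ => Finset.sum_congr rfl fun k _ => ?_
  rw [pow_add]; push_cast; ring

noncomputable def wN (n : ℕ) (j k : ℕ) : ℝ := n + 1 - j - k

lemma N_eq (n : ℕ) (c d : ℕ → ℂ) (z : ℂ) :
    drev n d z * pol n c z - z * rev n d z * dpol n c z = Sw n (wN n) c d z := by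
  have : z * rev n d z * dpol n c z = rev n d z * ∑ k ∈ Finset.range (n + 1), c k * (k * z ^ k) := by
    rw [mul_comm z, mul_assoc]
    congr 1
    rw [dpol, Finset.mul_sum]
    refine Finset.sum_congr rfl fun k _ => ?_
    rcases k with _ | k
    · simp
    · simp only [Nat.add_sub_cancel, pow_succ]; ring
  rw [this, mul_comm (drev n d z), mul_comm (rev n d z)]
  simp only [pol, rev, drev, Sw, Finset.sum_mul_sum, ← Finset.sum_sub_distrib]
  refine Finset.sum_congr rfl fun j _ => Finset.sum_congr rfl fun k _ => ?_
  rw [pow_add, wN]; push_cast; ring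

lemma hasDerivAt_pol (n : ℕ) (c : ℕ → ℂ) (z : ℂ) : HasDerivAt (pol n c) (dpol n c z) z := by
  unfold pol dpol
  exact HasDerivAt.fun_sum fun k _ => (hasDerivAt_pow k z).const_mul (c k)

lemma hasDerivAt_zrev (n : ℕ) (c : ℕ → ℂ) (z : ℂ) :
    HasDerivAt (fun z => z * rev n c z) (drev n c z) z := by
  have : (fun z => z * rev n c z) = fun z => ∑ k ∈ Finset.range (n + 1), conj (c k) * z ^ (n - k + 1) := by
    ext z
    rw [rev, Finset.mul_sum]
    refine Finset.sum_congr rfl fun k _ => ?_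
    rw [pow_succ]; ring
  rw [this]
  unfold drev
  refine HasDerivAt.fun_sum fun k hk => ?_
  refine ((hasDerivAt_pow (n - k + 1) z).const_mul (conj (c k))).congr_deriv ?_
  have : k ≤ n := by simp at hk; omega
  push_cast [Nat.cast_sub this]
  ring

lemma rev_circle (n : ℕ) (c : ℕ → ℂ) (z : ℂ) (hz : ‖z‖ = 1) :
    rev n c z = z ^ n * conj (pol n c z) := by
  simp only [rev, pol, map_sum, Finset.mul_sum]
  refine Finset.sum_congr rfl fun k hk => ?_
  have hk' : k ≤ n := by simp at hk; omega
  have h1 : z * conj z = 1 := by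
    rw [mul_comm, ← Complex.normSq_eq_conj_mul_self, Complex.normSq_eq_norm_sq, hz]; norm_num
  have h2 : z ^ n = z ^ (n - k) * z ^ k := by rw [← pow_add]; congr 1; omega
  have h3 : z ^ k * conj z ^ k = 1 := by rw [← mul_pow, h1, one_pow]
  simp only [map_mul, map_pow]
  rw [h2]
  linear_combination (-(conj (c k) * z ^ (n - k))) * h3

lemma cf_big {n : ℕ} (x : EE n) (k : ℕ) (hk : n < k) : cf x k = 0 := by
  rcases k with _ | k
  · omega
  · simp only [cf]
    rw [dif_neg (by omega)]

lemma cf_add {n : ℕ} (x y : EE n) (k : ℕ) : cf (x + y) k = cf x k + cf y k := by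
  rcases k with _ | k
  · simp [cf]
  · simp only [cf]; split_ifs <;> simp

lemma cf_smul {n : ℕ} (a : ℝ) (x : EE n) (k : ℕ) : cf (a • x) k = a * cf x k := by
  rcases k with _ | k
  · simp [cf]
  · simp only [cf]; split_ifs <;> simp

lemma cf_inj {n : ℕ} (x : EE n) (h : ∀ k ≤ n, cf x k = 0) : x = 0 := by
  ext
  · have := h 0 (by omega)
    simpa [cf] using this
  · rename_i i
    have := h (i + 1) i.2
    simp only [cf, i.2, dite_true] at this
    simp [this]

lemma continuous_cf {n : ℕ} (k : ℕ) : Continuous fun x : EE n => cf x k := by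
  rcases k with _ | k
  · simp only [cf]; fun_prop
  · simp only [cf]; split_ifs
    · fun_prop
    · exact continuous_const

lemma Lt_add (n : ℕ) (s t : EE n) (z : ℂ) : Lt n (s + t) z = Lt n s z + Lt n t z := by
  simp only [Lt, Prod.fst_add, Prod.snd_add, Pi.add_apply, map_add, Complex.ofReal_add, add_mul,
    Finset.sum_add_distrib]
  ring

lemma Lt_smul (n : ℕ) (a : ℝ) (t : EE n) (z : ℂ) : Lt n (a • t) z = a * Lt n t z := by
  simp only [Lt, Prod.smul_fst, Prod.smul_snd, Pi.smul_apply, mul_add, Finset.mul_sum]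
  congr 1
  · simp; ring
  · refine Finset.sum_congr rfl fun m _ => ?_
    simp
    ring

lemma continuous_Lt (n : ℕ) : Continuous fun q : EE n × ℂ => Lt n q.1 q.2 := by
  unfold Lt
  fun_prop

lemma continuous_pol_cf (n : ℕ) : Continuous fun q : EE n × ℂ => pol n (cf q.1) q.2 := by
  unfold pol
  refine continuous_finsetSum _ fun k _ => ?_
  exact ((continuous_cf k).comp continuous_fst).mul (continuous_snd.pow k)

/-- The bilinear map. -/
noncomputable def BB (n : ℕ) : EE n →ₗ[ℝ] EE n →ₗ[ℝ] EE n :=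
  LinearMap.mk₂ ℝ (fun x y => Tw n (wN n) (cf x) (cf y))
    (by
      intro x x' y
      ext
      · simp only [Tw, cf_add, Prod.fst_add, ← Finset.sum_add_distrib]
        refine Finset.sum_congr rfl fun k _ => ?_
        simp; ring
      · simp only [Tw, cf_add, Prod.snd_add, Pi.add_apply, ← Finset.sum_add_distrib]
        refine Finset.sum_congr rfl fun k _ => ?_
        simp; ring)
    (by
      intro a x y
      ext
      · simp only [Tw, cf_smul, Prod.smul_fst, Finset.smul_sum]
        refine Finset.sum_congr rfl fun k _ => ?_
        simp; ring
      · simp only [Tw, cf_smul, Prod.smul_snd, Pi.smul_apply, Finset.smul_sum]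
        refine Finset.sum_congr rfl fun k _ => ?_
        simp; ring)
    (by
      intro x y y'
      ext
      · simp only [Tw, cf_add, Prod.fst_add, ← Finset.sum_add_distrib]
        refine Finset.sum_congr rfl fun k _ => ?_
        simp; ring
      · simp only [Tw, cf_add, Prod.snd_add, Pi.add_apply, ← Finset.sum_add_distrib]
        refine Finset.sum_congr rfl fun k _ => ?_
        simp; ring)
    (by
      intro a x y
      ext
      · simp only [Tw, cf_smul, Prod.smul_fst, Finset.smul_sum]
        refine Finset.sum_congr rfl fun k _ => ?_
        simp; ring
      · simp only [Tw, cf_smul, Prod.smul_snd, Pi.smul_apply, Finset.smul_sum]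
        refine Finset.sum_congr rfl fun k _ => ?_
        simp; ring)

lemma BB_apply (n : ℕ) (x y : EE n) : BB n x y = Tw n (wN n) (cf x) (cf y) := rfl

lemma BB_symm (n : ℕ) (x y : EE n) : BB n x y = BB n y x := by
  rw [BB_apply, BB_apply]
  ext
  · simp only [Tw]
    refine Finset.sum_congr rfl fun k _ => ?_
    rw [add_comm]
  · simp only [Tw]
    refine Finset.sum_congr rfl fun k _ => ?_
    ring

lemma wN_symm (n j k : ℕ) : wN n j k = wN n k j := by unfold wN; ring

lemma Lt_BB (n : ℕ) (x y : EE n) (z : ℂ) :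
    Lt n (BB n x y) z = (drev n (cf y) z * pol n (cf x) z - z * rev n (cf y) z * dpol n (cf x) z)
     + (drev n (cf x) z * pol n (cf y) z - z * rev n (cf x) z * dpol n (cf y) z) := by
  rw [BB_apply, N_eq, N_eq, Sw_add n _ (wN_symm n) _ _ (cf_big x) (cf_big y)]

lemma BB_hasStrictFDerivAt (n : ℕ) (x : EE n) :
    ∃ D : EE n →L[ℝ] EE n, HasStrictFDerivAt (fun x => BB n x x) D x ∧ ∀ y, D y = (2:ℝ) • BB n x y := by
  let C : EE n →L[ℝ] EE n →L[ℝ] EE n :=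
    LinearMap.toContinuousLinearMap
      ((LinearMap.toContinuousLinearMap (𝕜 := ℝ) (E := EE n) (F' := EE n)).toLinearMap ∘ₗ BB n)
  have hC : ∀ x y, C x y = BB n x y := fun x y => rfl
  have h1 := C.isBoundedBilinearMap.hasStrictFDerivAt (x, x)
  have h2 : HasStrictFDerivAt (fun x : EE n => (x, x))
      ((ContinuousLinearMap.id ℝ (EE n)).prod (ContinuousLinearMap.id ℝ (EE n))) x :=
    (hasStrictFDerivAt_id x).prodMk (hasStrictFDerivAt_id x)
  refine ⟨_, HasStrictFDerivAt.comp (g := fun p : EE n × EE n => C p.1 p.2) (f := fun x => (x,x)) x h1 h2, fun y => ?_⟩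
  simp [IsBoundedBilinearMap.deriv_apply, hC]
  rw [BB_symm n y x, two_smul]

lemma max_disc (g : ℂ → ℂ) (hg : ∀ z, ‖z‖ ≤ 1 → AnalyticAt ℂ g z) (C : ℝ)
    (h : ∀ z, ‖z‖ = 1 → ‖g z‖ ≤ C) (z : ℂ) (hz : ‖z‖ ≤ 1) : ‖g z‖ ≤ C := by
  have hcl : closure (ball (0:ℂ) 1) = closedBall 0 1 := closure_ball _ one_ne_zero
  refine Complex.norm_le_of_forall_mem_frontier_norm_le (U := ball (0:ℂ) 1) isBounded_ball ?_ ?_ ?_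
  · apply DifferentiableOn.diffContOnCl
    rw [hcl]
    intro w hw
    exact (hg w (by simpa using hw)).differentiableAt.differentiableWithinAt
  · intro w hw
    rw [frontier_ball _ one_ne_zero] at hw
    exact h w (by simpa using hw)
  · rw [hcl]; simpa using hz

lemma min_disc (g : ℂ → ℂ) (hg : ∀ z, ‖z‖ ≤ 1 → AnalyticAt ℂ g z) (hg0 : ∀ z, ‖z‖ ≤ 1 → g z ≠ 0)
    (δ : ℝ) (hδ : 0 < δ)
    (h : ∀ z, ‖z‖ = 1 → δ ≤ ‖g z‖) (z : ℂ) (hz : ‖z‖ ≤ 1) : δ ≤ ‖g z‖ := by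
  have := max_disc (fun z => (g z)⁻¹) (fun z hz => (hg z hz).inv (hg0 z hz)) δ⁻¹ (by
    intro w hw
    rw [norm_inv]
    exact inv_anti₀ hδ (h w hw)) z hz
  rw [norm_inv] at this
  exact (inv_le_inv₀ (norm_pos_iff.2 (hg0 z hz)) hδ).1 this

lemma boundary_deriv (g : ℂ → ℂ) (ζ : ℂ) (hζ : ‖ζ‖ = 1) (hg : DifferentiableAt ℂ g ζ)
    (h : ∀ z, ‖z‖ ≤ 1 → ‖g z‖ ≤ ‖z‖) (h1 : ‖g ζ‖ = 1) : 1 ≤ ‖deriv g ζ‖ := by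
  have h2 := hg.hasDerivAt
  rw [hasDerivAt_iff_tendsto_slope] at h2
  have h3 : Tendsto (fun t : ℝ => (t : ℂ) * ζ) (𝓝[<] 1) (𝓝[≠] ζ) := by
    rw [tendsto_nhdsWithin_iff]
    constructor
    · have : Tendsto (fun t : ℝ => (t : ℂ) * ζ) (𝓝 1) (𝓝 (((1:ℝ):ℂ) * ζ)) :=
        Continuous.tendsto (by fun_prop) 1
      simp only [Complex.ofReal_one, one_mul] at this
      exact this.mono_left nhdsWithin_le_nhds
    · filter_upwards [self_mem_nhdsWithin] with t ht
      intro h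
      have hz : ζ ≠ 0 := by intro h; simp [h] at hζ
      have : ((t:ℂ) - 1) * ζ = 0 := by
        simp only [Set.mem_singleton_iff] at h
        rw [sub_mul, h]; ring
      rcases mul_eq_zero.1 this with h | h
      · have : (t:ℂ) = ((1:ℝ):ℂ) := by push_cast; linear_combination h
        have := Complex.ofReal_injective this
        simp at ht; linarith
      · exact hz h
  have h4 := (h2.comp h3).norm
  refine ge_of_tendsto h4 ?_
  have : ∀ᶠ t : ℝ in 𝓝[<] 1, 0 < t := by
    apply nhdsWithin_le_nhds
    exact eventually_gt_nhds (by norm_num)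
  filter_upwards [self_mem_nhdsWithin, this] with t ht ht0
  simp only [Set.mem_Iio] at ht
  have e1 : ‖(t:ℂ) * ζ‖ = t := by rw [norm_mul, hζ, mul_one, Complex.norm_real, Real.norm_of_nonneg ht0.le]
  have e2 : ‖g ((t:ℂ) * ζ)‖ ≤ t := by
    have := h ((t:ℂ) * ζ) (by rw [e1]; exact ht.le)
    rwa [e1] at this
  simp only [Function.comp, slope_def_field, norm_div]
  have e3 : ‖(t:ℂ) * ζ - ζ‖ = 1 - t := by
    have : (t:ℂ) * ζ - ζ = ((t - 1 : ℝ):ℂ) * ζ := by push_cast; ring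
    rw [this, norm_mul, hζ, mul_one, Complex.norm_real, Real.norm_of_nonpos (by linarith)]; ring
  rw [e3, le_div_iff₀ (by linarith)]
  have := norm_sub_norm_le (g ζ) (g ((t:ℂ) * ζ))
  rw [norm_sub_rev] at this
  linarith

/-- admissible parameters -/
def XX (n : ℕ) : Set (EE n) := {x | 0 < x.1 ∧ ∀ z, ‖z‖ ≤ 1 → pol n (cf x) z ≠ 0}

noncomputable def ff (n : ℕ) (x : EE n) (z : ℂ) : ℂ := z * rev n (cf x) z / pol n (cf x) z

lemma analytic_pol (n : ℕ) (c : ℕ → ℂ) (z : ℂ) : AnalyticAt ℂ (pol n c) z := by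
  have : Differentiable ℂ (pol n c) := fun z => (hasDerivAt_pol n c z).differentiableAt
  exact this.analyticAt z

lemma analytic_rev (n : ℕ) (c : ℕ → ℂ) (z : ℂ) : AnalyticAt ℂ (rev n c) z := by
  have : Differentiable ℂ (rev n c) := by unfold rev; fun_prop
  exact this.analyticAt z

lemma analytic_ff (n : ℕ) (x : EE n) (hx : x ∈ XX n) (z : ℂ) (hz : ‖z‖ ≤ 1) :
    AnalyticAt ℂ (ff n x) z :=
  (analyticAt_id.mul (analytic_rev _ _ _)).div (analytic_pol _ _ _) (hx.2 z hz)

lemma norm_rev_circle (n : ℕ) (c : ℕ → ℂ) (z : ℂ) (hz : ‖z‖ = 1) :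
    ‖rev n c z‖ = ‖pol n c z‖ := by
  rw [rev_circle n c z hz]; simp [hz]

lemma norm_ff_circle (n : ℕ) (x : EE n) (hx : x ∈ XX n) (z : ℂ) (hz : ‖z‖ = 1) :
    ‖ff n x z‖ = 1 := by
  rw [ff, norm_div, norm_mul, norm_rev_circle _ _ _ hz, hz, one_mul]
  exact div_self (norm_ne_zero_iff.2 (hx.2 z hz.le))

lemma norm_ff_le (n : ℕ) (x : EE n) (hx : x ∈ XX n) (z : ℂ) (hz : ‖z‖ ≤ 1) :
    ‖ff n x z‖ ≤ ‖z‖ := by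
  have := max_disc (fun z => rev n (cf x) z / pol n (cf x) z)
    (fun z hz => (analytic_rev _ _ _).div (analytic_pol _ _ _) (hx.2 z hz)) 1 (by
      intro z hz
      rw [norm_div, norm_rev_circle _ _ _ hz]
      exact div_self_le_one _) z hz
  rw [ff, mul_div_assoc, norm_mul]
  exact mul_le_of_le_one_right (norm_nonneg _) this

lemma deriv_ff (n : ℕ) (x : EE n) (z : ℂ) (hz : pol n (cf x) z ≠ 0) :
    HasDerivAt (ff n x) ((drev n (cf x) z * pol n (cf x) z - z * rev n (cf x) z * dpol n (cf x) z)
      / pol n (cf x) z ^ 2) z :=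
  (hasDerivAt_zrev n (cf x) z).div (hasDerivAt_pol n (cf x) z) hz

lemma pol_bound (n : ℕ) (x : EE n) (hx : x ∈ XX n) (z : ℂ) (hz : ‖z‖ = 1) :
    2 * ‖pol n (cf x) z‖ ^ 2 ≤ ‖Lt n (BB n x x) z‖ := by
  have h0 := hx.2 z hz.le
  have h1 := boundary_deriv (ff n x) z hz (deriv_ff n x z h0).differentiableAt
    (norm_ff_le n x hx) (norm_ff_circle n x hx z hz)
  rw [(deriv_ff n x z h0).deriv, norm_div, norm_pow, one_le_div (by positivity)] at h1
  rw [Lt_BB, ← two_mul, norm_mul]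
  simp
  exact h1

lemma pol_zero_coeff (n : ℕ) (c : ℕ → ℂ) (S : Set ℂ) (hS : S.Infinite)
    (h : ∀ z ∈ S, pol n c z = 0) : ∀ k ≤ n, c k = 0 := by
  let P : Polynomial ℂ := ∑ k ∈ Finset.range (n + 1), Polynomial.C (c k) * Polynomial.X ^ k
  have hP : ∀ z, P.eval z = pol n c z := by
    intro z; simp [P, pol, Polynomial.eval_finsetSum]
  have h0 : P = 0 := by
    apply Polynomial.eq_zero_of_infinite_isRoot
    refine hS.mono fun z hz => ?_
    simp only [Set.mem_ofPred_eq, Polynomial.IsRoot, hP, h z hz]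
  intro k hk
  have : P.coeff k = c k := by
    simp only [P, Polynomial.finsetSum_coeff, Polynomial.coeff_C_mul_X_pow]
    rw [Finset.sum_ite_eq, if_pos (by simp; omega)]
  rw [← this, h0]; simp

lemma BB_inj (n : ℕ) (x : EE n) (hx : x ∈ XX n) (y : EE n) (h : BB n x y = 0) : y = 0 := by
  have hL : ∀ z, (drev n (cf y) z * pol n (cf x) z - z * rev n (cf y) z * dpol n (cf x) z)
     + (drev n (cf x) z * pol n (cf y) z - z * rev n (cf x) z * dpol n (cf y) z) = 0 := by
    intro z
    rw [← Lt_BB, h]; simp [Lt]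
  have H : LinData (ff n x) (fun z => pol n (cf y) z / pol n (cf x) z)
      (fun z => z * rev n (cf y) z / pol n (cf x) z) :=
    { hf := analytic_ff n x hx
      hs := fun z hz => (analytic_pol _ _ _).div (analytic_pol _ _ _) (hx.2 z hz)
      hm := fun z hz => (analyticAt_id.mul (analytic_rev _ _ _)).div (analytic_pol _ _ _) (hx.2 z hz)
      hfz := norm_ff_le n x hx
      hfc := norm_ff_circle n x hx
      hcirc := by
        intro z hz
        have h0 := hx.2 z hz.le
        have h0' : conj (pol n (cf x) z) ≠ 0 := by simpa using h0
        have h1 : z * conj z = 1 := by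
          rw [mul_comm, ← Complex.normSq_eq_conj_mul_self, Complex.normSq_eq_norm_sq, hz]; norm_num
        have h2 : z ^ n * conj z ^ n = 1 := by rw [← mul_pow, h1, one_pow]
        simp only [ff]
        rw [rev_circle _ _ _ hz, rev_circle _ _ _ hz]
        simp only [map_div₀, map_mul, map_pow, Complex.conj_conj]
        field_simp
        linear_combination (conj (pol n (cf y) z)) * (z ^ n * conj z ^ n) * h1 +
          (conj (pol n (cf y) z)) * h2
      hode := by
        intro z hz
        have h0 := hx.2 z hz
        rw [(deriv_ff n x z h0).deriv, ((hasDerivAt_zrev n (cf y) z).fun_div (hasDerivAt_pol n (cf x) z) h0).deriv,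
          ((hasDerivAt_pol n (cf y) z).fun_div (hasDerivAt_pol n (cf x) z) h0).deriv]
        simp only [ff]
        have := hL z
        field_simp
        linear_combination (pol n (cf x) z) * this }
  have h1 := rigidity H (by simp) (by
    have : ∀ x : EE n, pol n (cf x) 0 = (x.1 : ℂ) := by
      intro x
      rw [pol, Finset.sum_eq_single 0]
      · simp [cf]
      · intro k _ hk; simp [hk]
      · simp
    simp only [this, ← Complex.ofReal_div, Complex.ofReal_im])
  refine cf_inj y (pol_zero_coeff n (cf y) (ball 0 1) ?_ ?_)
  · exact infinite_of_mem_nhds (0:ℂ) (ball_mem_nhds _ one_pos)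
  · intro z hz
    rcases div_eq_zero_iff.1 (h1 z hz) with h | h
    · exact h
    · exact absurd h (hx.2 z (by simp at hz; exact hz.le))

lemma pol_cf_zero (n : ℕ) (x : EE n) : pol n (cf x) 0 = (x.1 : ℂ) := by
  rw [pol, Finset.sum_eq_single 0]
  · simp [cf]
  · intro k _ hk; simp [hk]
  · simp

lemma XX_open (n : ℕ) : IsOpen (XX n) := by
  rw [isOpen_iff_mem_nhds]
  intro x hx
  have h1 : ∀ᶠ y : EE n in 𝓝 x, 0 < y.1 :=
    continuous_fst.continuousAt.eventually (lt_mem_nhds hx.1)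
  have h2 : ∀ᶠ y : EE n in 𝓝 x, ∀ z ∈ closedBall (0:ℂ) 1, pol n (cf y) z ≠ 0 := by
    apply IsCompact.eventually_forall_of_forall_eventually (isCompact_closedBall _ _)
    intro z hz
    exact (continuous_pol_cf n).continuousAt.eventually_ne (hx.2 z (by simpa using hz))
  filter_upwards [h1, h2] with y hy1 hy2
  exact ⟨hy1, fun z hz => hy2 z (by simpa using hz)⟩

lemma BB_nhds (n : ℕ) (x : EE n) (hx : x ∈ XX n) :
    (fun x => BB n x x) '' XX n ∈ 𝓝 (BB n x x) := by
  obtain ⟨D, hD, hD'⟩ := BB_hasStrictFDerivAt n x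
  have inj : Function.Injective D.toLinearMap := by
    rw [← LinearMap.ker_eq_bot, LinearMap.ker_eq_bot']
    intro y hy
    have hy' : D y = 0 := hy
    rw [hD'] at hy'
    exact BB_inj n x hx y ((smul_eq_zero.1 hy').resolve_left two_ne_zero)
  have surj : Function.Surjective D.toLinearMap := LinearMap.injective_iff_surjective.1 inj
  have hr : D.range = ⊤ := LinearMap.range_eq_top.2 surj
  rw [← hD.map_nhds_eq_of_surj hr]
  exact image_mem_map ((XX_open n).mem_nhds hx)

lemma XX_closed (n : ℕ) (u : ℕ → EE n) (x : EE n) (hu : ∀ i, u i ∈ XX n)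
    (hux : Tendsto u atTop (𝓝 x)) (hc : ∀ z, ‖z‖ = 1 → pol n (cf x) z ≠ 0) : x ∈ XX n := by
  have hpc : Continuous (pol n (cf x)) :=
    continuous_iff_continuousAt.2 fun z => (analytic_pol n (cf x) z).continuousAt
  obtain ⟨z0, hz0, hmin⟩ := (isCompact_sphere (0:ℂ) 1).exists_isMinOn ⟨1, by simp⟩
    (hpc.norm.continuousOn (s := sphere (0:ℂ) 1))
  set δ := ‖pol n (cf x) z0‖ / 2 with hδ
  have hδ0 : 0 < δ := by
    have := norm_pos_iff.2 (hc z0 (by simpa using hz0))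
    positivity
  have h2 : ∀ᶠ y : EE n in 𝓝 x, ∀ z ∈ sphere (0:ℂ) 1, δ < ‖pol n (cf y) z‖ := by
    apply IsCompact.eventually_forall_of_forall_eventually (isCompact_sphere _ _)
    intro z hz
    apply (continuous_pol_cf n).norm.continuousAt.eventually (lt_mem_nhds _)
    have := hmin hz
    simp only [Set.mem_ofPred_eq] at this
    simp only
    linarith
  have h3 := hux.eventually h2
  have h4 : ∀ z, ‖z‖ ≤ 1 → pol n (cf x) z ≠ 0 := by
    intro z hz
    have h5 : Tendsto (fun i => ‖pol n (cf (u i)) z‖) atTop (𝓝 ‖pol n (cf x) z‖) := by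
      have : Continuous fun y : EE n => ‖pol n (cf y) z‖ :=
        ((continuous_pol_cf n).comp (continuous_id.prodMk continuous_const)).norm
      exact (this.tendsto x).comp hux
    have h6 : δ ≤ ‖pol n (cf x) z‖ := by
      refine ge_of_tendsto h5 ?_
      filter_upwards [h3] with i hi
      exact min_disc _ (fun z _ => analytic_pol n _ z) (hu i).2 δ hδ0
        (fun z hz => (hi z (by simpa using hz)).le) z hz
    exact norm_pos_iff.1 (hδ0.trans_le h6)
  refine ⟨?_, h4⟩
  have h7 : 0 ≤ x.1 := ge_of_tendsto' ((continuous_fst.tendsto x).comp hux) fun i => (hu i).1.le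
  have h8 := h4 0 (by simp)
  rw [pol_cf_zero] at h8
  exact lt_of_le_of_ne h7 fun h => h8 (by rw [← h]; simp)

lemma coeff_bound (n : ℕ) : ∃ K : NNReal, ∀ (x : EE n) (M : ℝ), 0 ≤ M →
    (∀ z, ‖z‖ = 1 → ‖pol n (cf x) z‖ ≤ M) → ‖x‖ ≤ K * M := by
  let T : EE n →ₗ[ℝ] (Fin (n + 1) → ℂ) :=
    { toFun := fun x i => pol n (cf x) (1 / ((i : ℕ) + 1 : ℂ))
      map_add' := by
        intro x y; ext i
        simp only [pol, cf_add, Pi.add_apply, ← Finset.sum_add_distrib, add_mul]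
      map_smul' := by
        intro a y; ext i
        simp only [pol, cf_smul, Pi.smul_apply, Finset.smul_sum]
        refine Finset.sum_congr rfl fun k _ => ?_
        simp; ring }
  have hT : LinearMap.ker T = ⊥ := by
    rw [LinearMap.ker_eq_bot']
    intro x hx
    apply cf_inj
    let P : Polynomial ℂ := ∑ k ∈ Finset.range (n + 1), Polynomial.C (cf x k) * Polynomial.X ^ k
    have hP : ∀ z, P.eval z = pol n (cf x) z := by
      intro z; simp [P, pol, Polynomial.eval_finsetSum]
    have h0 : P = 0 := by
      apply Polynomial.eq_zero_of_natDegree_lt_card_of_eval_eq_zero P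
        (f := fun i : Fin (n + 1) => (1 / ((i : ℕ) + 1 : ℂ)))
      · intro i j hij
        simp only [one_div, inv_inj, add_left_inj, Nat.cast_inj] at hij
        exact Fin.ext hij
      · intro i
        rw [hP]
        exact congrFun hx i
      · rw [Fintype.card_fin]
        apply Nat.lt_succ_of_le
        apply Polynomial.natDegree_sum_le_of_forall_le
        intro k hk
        refine (Polynomial.natDegree_C_mul_X_pow_le _ _).trans ?_
        simp at hk; omega
    intro k hk
    have : P.coeff k = cf x k := by
      simp only [P, Polynomial.finsetSum_coeff, Polynomial.coeff_C_mul_X_pow]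
      rw [Finset.sum_ite_eq, if_pos (by simp; omega)]
    rw [← this, h0]; simp
  obtain ⟨K, hK, hKT⟩ := T.exists_antilipschitzWith hT
  refine ⟨K, fun x M hM h => ?_⟩
  have h1 := hKT.le_mul_dist x 0
  rw [map_zero, dist_zero_right, dist_zero_right] at h1
  refine h1.trans ?_
  gcongr
  rw [pi_norm_le_iff_of_nonneg hM]
  intro i
  refine max_disc _ (fun z _ => analytic_pol n (cf x) z) M h _ ?_
  rw [norm_div, norm_one]
  have : ‖((i:ℕ):ℂ) + 1‖ = (i:ℕ) + 1 := by
    rw [← Nat.cast_succ, Complex.norm_natCast]; push_cast; rfl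
  rw [this]
  apply div_le_one_of_le₀ <;> linarith [Nat.cast_nonneg (α := ℝ) (i:ℕ)]

/-- Base parameter. -/
lemma base_mem (n : ℕ) : ((1, 0) : EE n) ∈ XX n := by
  refine ⟨by simp, fun z _ => ?_⟩
  have : pol n (cf ((1, 0) : EE n)) z = 1 := by
    rw [pol, Finset.sum_eq_single 0]
    · simp [cf]
    · intro k _ hk
      rcases k with _ | k
      · exact absurd rfl hk
      · simp [cf]
    · simp
  rw [this]; exact one_ne_zero

lemma base_Lt (n : ℕ) (z : ℂ) :
    Lt n (BB n (1, 0) (1, 0)) z = 2 * (n + 1) * z ^ n := by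
  have key : ∀ g : ℕ → ℂ, ∑ k ∈ Finset.range (n + 1), cf ((1, 0) : EE n) k * g k = g 0 := by
    intro g
    rw [Finset.sum_eq_single 0]
    · simp [cf]
    · intro k _ hk
      rcases k with _ | k
      · exact absurd rfl hk
      · simp [cf]
    · simp
  have hconj : ∀ k, conj (cf ((1, 0) : EE n) k) = cf ((1, 0) : EE n) k := by
    intro k
    rcases k with _ | k
    · simp [cf]
    · simp [cf]
  rw [Lt_BB]
  simp only [pol, rev, dpol, drev, hconj, key]
  simp
  ring

lemma continuity_method (n : ℕ) (t : EE n)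
    (ht : ∀ z, ‖z‖ = 1 → ∃ a : ℝ, 0 < a ∧ Lt n t z = a * z ^ n) :
    ∃ x ∈ XX n, BB n x x = t := by
  let γ : ℝ → EE n := fun s => (1 - s) • BB n (1, 0) (1, 0) + s • t
  have hγc : Continuous γ := by fun_prop
  have hγ : ∀ s ∈ Set.Icc (0:ℝ) 1, ∀ z, ‖z‖ = 1 → Lt n (γ s) z ≠ 0 := by
    intro s hs z hz
    obtain ⟨a, ha, hta⟩ := ht z hz
    have hz0 : z ≠ 0 := by intro h; simp [h] at hz
    have : Lt n (γ s) z = (((1 - s) * (2 * (n + 1)) + s * a : ℝ) : ℂ) * z ^ n := by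
      simp only [γ]
      rw [Lt_add, Lt_smul, Lt_smul, base_Lt, hta]; push_cast; ring
    rw [this]
    refine mul_ne_zero ?_ (pow_ne_zero _ hz0)
    rw [Ne, Complex.ofReal_eq_zero]
    have h1 : (0:ℝ) < 2 * (n + 1) := by positivity
    rcases hs.1.eq_or_lt with h | h
    · rw [← h]; simp; positivity
    · have : 0 ≤ (1 - s) * (2 * (n + 1) : ℝ) := mul_nonneg (by linarith [hs.2]) h1.le
      have : 0 < s * a := mul_pos h ha
      linarith
  let S : Set ℝ := {s | γ s ∈ (fun x => BB n x x) '' XX n}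
  suffices h : Set.Icc (0:ℝ) 1 ⊆ S by
    obtain ⟨x, hx, hx'⟩ := h (Set.right_mem_Icc.2 zero_le_one)
    refine ⟨x, hx, ?_⟩
    simpa [γ] using hx'
  have hBBc : Continuous fun x : EE n => BB n x x := by
    rw [continuous_iff_continuousAt]
    intro x
    obtain ⟨D, hD, _⟩ := BB_hasStrictFDerivAt n x
    exact hD.continuousAt
  refine IsClosed.Icc_subset_of_forall_mem_nhdsWithin ?_ ?_ ?_
  · rw [← isSeqClosed_iff_isClosed]
    intro s s0 hs hss
    have hs0 : s0 ∈ Set.Icc (0:ℝ) 1 := isClosed_Icc.mem_of_tendsto hss (Eventually.of_forall fun i => (hs i).2)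
    refine ⟨?_, hs0⟩
    choose u hu hu' using fun i => (hs i).1
    simp only at hu'
    -- bound
    obtain ⟨K0, hK0⟩ := (isCompact_Icc (a := (0:ℝ)) (b := 1)).prod (isCompact_sphere (0:ℂ) 1) |>.exists_bound_of_continuousOn
      (f := fun p : ℝ × ℂ => Lt n (γ p.1) p.2)
      ((continuous_Lt n).comp ((hγc.comp continuous_fst).prodMk continuous_snd)).continuousOn
    obtain ⟨K, hK⟩ := coeff_bound n
    have hub : ∀ i, u i ∈ closedBall (0 : EE n) (K * (K0 + 1)) := by
      intro i
      rw [mem_closedBall_zero_iff]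
      have hK00 : 0 ≤ K0 := (norm_nonneg _).trans (hK0 (0, 1) (by simp))
      apply hK _ _ (by linarith)
      intro z hz
      have h1 := pol_bound n (u i) (hu i) z hz
      rw [hu' i] at h1
      have h2 := hK0 (s i, z) ⟨(hs i).2, by simpa using hz⟩
      simp only at h2
      nlinarith [norm_nonneg (pol n (cf (u i)) z)]
    obtain ⟨x, -, θ, hθ, hx⟩ := (isCompact_closedBall (0 : EE n) (K * (K0 + 1))).tendsto_subseq hub
    have hBx : BB n x x = γ s0 := by
      have h1 := (hBBc.tendsto x).comp hx
      have h2 := ((hγc.tendsto s0).comp hss).comp hθ.tendsto_atTop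
      refine tendsto_nhds_unique h1 (h2.congr fun i => ?_)
      simp [Function.comp, hu']
    refine ⟨x, XX_closed n (u ∘ θ) x (fun i => hu _) hx ?_, hBx⟩
    intro z hz hp
    apply hγ s0 hs0 z hz
    rw [← hBx, Lt_BB]
    have : rev n (cf x) z = 0 := by rw [rev_circle _ _ _ hz, hp]; simp
    rw [hp, this]; ring
  · refine ⟨(1, 0), base_mem n, ?_⟩
    simp [γ]
  · rintro s ⟨⟨x, hx, hx'⟩, hs⟩
    apply mem_nhdsWithin_of_mem_nhds
    apply hγc.continuousAt
    rw [← hx']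
    exact BB_nhds n x hx

theorem finite_blaschke (Q : Polynomial ℂ) (hQ : Q ≠ 0) (hroot : ∀ z, Q.eval z = 0 → ‖z‖ < 1) :
    ∃ f k : ℂ → ℂ, (∀ z, ‖z‖ ≤ 1 → AnalyticAt ℂ f z) ∧ (∀ z, ‖z‖ ≤ 1 → ‖f z‖ ≤ ‖z‖) ∧
      (∀ z, ‖z‖ = 1 → ‖f z‖ = 1) ∧ (∀ z, ‖z‖ ≤ 1 → AnalyticAt ℂ k z) ∧
      (∀ z, ‖z‖ ≤ 1 → k z ≠ 0) ∧ (∀ z, ‖z‖ ≤ 1 → deriv f z = Q.eval z * k z) := by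
  set n := Q.natDegree with hn
  have hpol : ∀ z, pol n Q.coeff z = Q.eval z := by
    intro z; rw [Polynomial.eval_eq_sum_range]; rfl
  have hbig : ∀ k, n < k → Q.coeff k = 0 := fun k hk => Polynomial.coeff_eq_zero_of_natDegree_lt hk
  have hLt : ∀ z, Lt n (Tw n (fun _ _ => 1) Q.coeff Q.coeff) z = 2 * (Q.eval z * rev n Q.coeff z) := by
    intro z
    rw [← Sw_add n (fun _ _ => 1) (fun _ _ => rfl) _ _ hbig hbig, ← pol_mul_rev, hpol]; ring
  obtain ⟨x, hx, hBx⟩ := continuity_method n (Tw n (fun _ _ => 1) Q.coeff Q.coeff) (by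
    intro z hz
    refine ⟨2 * ‖Q.eval z‖ ^ 2, ?_, ?_⟩
    · have : Q.eval z ≠ 0 := fun h => by
        have := hroot z h
        linarith
      have := norm_pos_iff.2 this
      positivity
    · rw [hLt, rev_circle _ _ _ hz, hpol]
      push_cast
      rw [← Complex.mul_conj']; ring)
  refine ⟨ff n x, fun z => rev n Q.coeff z / pol n (cf x) z ^ 2, analytic_ff n x hx, norm_ff_le n x hx,
    norm_ff_circle n x hx, ?_, ?_, ?_⟩
  · intro z hz
    exact (analytic_rev _ _ _).div ((analytic_pol _ _ _).pow 2) (pow_ne_zero _ (hx.2 z hz))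
  · intro z hz
    refine div_ne_zero ?_ (pow_ne_zero _ (hx.2 z hz))
    by_cases h0 : z = 0
    · rw [h0, rev, Finset.sum_eq_single n]
      · simp only [Nat.sub_self, pow_zero, mul_one]
        simpa [hn] using hQ
      · intro k hk hkn
        have : n - k ≠ 0 := by simp at hk; omega
        simp [this]
      · simp
    · have e : rev n Q.coeff z = z ^ n * conj (Q.eval (conj z)⁻¹) := by
        rw [← hpol]
        simp only [rev, pol, map_sum, Finset.mul_sum]
        refine Finset.sum_congr rfl fun k hk => ?_
        have hk' : k ≤ n := by simp at hk; omega
        have h2 : z ^ n = z ^ (n - k) * z ^ k := by rw [← pow_add]; congr 1; omega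
        simp only [map_mul, map_pow, map_inv₀, Complex.conj_conj]
        rw [h2]
        have h3 : z ^ k * z⁻¹ ^ k = 1 := by rw [← mul_pow, mul_inv_cancel₀ h0, one_pow]
        linear_combination (-(conj (Q.coeff k) * z ^ (n - k))) * h3
      rw [e]
      refine mul_ne_zero (pow_ne_zero _ h0) ?_
      rw [Ne, map_eq_zero]
      intro h
      have := hroot _ h
      rw [norm_inv, RCLike.norm_conj] at this
      have h1 := norm_pos_iff.2 h0
      have := (one_le_inv₀ h1).2 hz
      linarith
  · intro z hz
    have h1 := Lt_BB n x x z
    rw [hBx, hLt] at h1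
    rw [(deriv_ff n x z (hx.2 z hz)).deriv, ← mul_div_assoc]
    congr 1
    linear_combination (-1/2 : ℂ) * h1

lemma E_gt (τ Φ : ℂ → ℂ) (z0 τ' Φ' : ℂ) (hτ : HasDerivAt τ τ' z0) (hΦ : HasDerivAt Φ Φ' z0)
    (hτ0 : τ z0 = 0) (h : ‖τ'‖ ≤ ‖Φ'‖) :
    ∀ᶠ z in 𝓝[≠] z0, 1 < (1 - ‖τ z‖ ^ 2) * Real.exp (‖Φ z - Φ z0‖ ^ 2 + ‖z - z0‖ ^ 2) := by
  have h1 := (hasDerivAt_iff_tendsto_slope.1 hτ).norm.pow 2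
  have h2 := (hasDerivAt_iff_tendsto_slope.1 hΦ).norm.pow 2
  have h3 : Tendsto (fun z => ‖Φ z - Φ z0‖ ^ 2 + ‖z - z0‖ ^ 2) (𝓝[≠] z0) (𝓝 0) := by
    have hc : ContinuousAt (fun z => ‖Φ z - Φ z0‖ ^ 2 + ‖z - z0‖ ^ 2) z0 := by
      have := hΦ.continuousAt
      fun_prop
    have := hc.tendsto
    simp only [sub_self, norm_zero] at this
    norm_num at this
    exact this.mono_left nhdsWithin_le_nhds
  have h4 : Tendsto (fun z => ‖slope Φ z0 z‖ ^ 2 + 1 - ‖slope τ z0 z‖ ^ 2 - ‖slope τ z0 z‖ ^ 2 *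
      (‖Φ z - Φ z0‖ ^ 2 + ‖z - z0‖ ^ 2)) (𝓝[≠] z0) (𝓝 (‖Φ'‖ ^ 2 + 1 - ‖τ'‖ ^ 2 - ‖τ'‖ ^ 2 * 0)) :=
    ((h2.add_const 1).sub h1).sub (h1.mul h3)
  have h5 : (0:ℝ) < ‖Φ'‖ ^ 2 + 1 - ‖τ'‖ ^ 2 - ‖τ'‖ ^ 2 * 0 := by
    nlinarith [norm_nonneg τ', norm_nonneg Φ']
  have h6 : ∀ᶠ z in 𝓝[≠] z0, ‖τ z‖ < 1 := by
    have : ∀ᶠ z in 𝓝 z0, ‖τ z‖ < 1 :=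
      hτ.continuousAt.norm.eventually (gt_mem_nhds (by simp [hτ0]))
    exact nhdsWithin_le_nhds this
  filter_upwards [h4.eventually (lt_mem_nhds h5), self_mem_nhdsWithin, h6] with z hz hne hlt
  have hne' : z - z0 ≠ 0 := sub_ne_zero.2 hne
  have hd : 0 < ‖z - z0‖ ^ 2 := by positivity
  have e1 : ‖τ z‖ ^ 2 = ‖slope τ z0 z‖ ^ 2 * ‖z - z0‖ ^ 2 := by
    rw [← mul_pow, ← norm_mul, slope_def_field, hτ0, sub_zero, div_mul_cancel₀ _ hne']
  have e2 : ‖Φ z - Φ z0‖ ^ 2 = ‖slope Φ z0 z‖ ^ 2 * ‖z - z0‖ ^ 2 := by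
    rw [← mul_pow, ← norm_mul, slope_def_field, div_mul_cancel₀ _ hne']
  set v := ‖Φ z - Φ z0‖ ^ 2 + ‖z - z0‖ ^ 2 with hv
  have e3 := Real.add_one_le_exp v
  have e4 : 0 < 1 - ‖τ z‖ ^ 2 := by nlinarith [norm_nonneg (τ z)]
  have e5 : (1 - ‖τ z‖ ^ 2) * (v + 1) ≤ (1 - ‖τ z‖ ^ 2) * Real.exp v := by gcongr
  refine lt_of_lt_of_le ?_ e5
  have e6 := mul_pos hd hz
  have : v = ‖slope Φ z0 z‖ ^ 2 * ‖z - z0‖ ^ 2 + ‖z - z0‖ ^ 2 := by rw [hv, e2]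
  rw [e1]
  generalize ‖slope τ z0 z‖ ^ 2 = T at *
  generalize ‖slope Φ z0 z‖ ^ 2 = P at *
  generalize ‖z - z0‖ ^ 2 = d at *
  nlinarith

lemma normSq_expand (a b : ℂ) : ‖a‖ ^ 2 = ‖a - b‖ ^ 2 + (2 * conj b * (a - b)).re + ‖b‖ ^ 2 := by
  simp only [Complex.sq_norm, Complex.normSq_apply]
  simp
  ring

lemma mobius_id (a b : ℂ) : ‖1 - conj b * a‖ ^ 2 - ‖a - b‖ ^ 2 = (1 - ‖a‖ ^ 2) * (1 - ‖b‖ ^ 2) := by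
  simp only [Complex.sq_norm, Complex.normSq_apply]
  simp
  ring

lemma comparison (f k ψ Φ H q : ℂ → ℂ) (hf : ∀ z, ‖z‖ ≤ 1 → AnalyticAt ℂ f z)
    (hfz : ∀ z, ‖z‖ ≤ 1 → ‖f z‖ ≤ ‖z‖) (hfc : ∀ z, ‖z‖ = 1 → ‖f z‖ = 1)
    (hk : ∀ z, ‖z‖ ≤ 1 → AnalyticAt ℂ k z) (hk0 : ∀ z, ‖z‖ ≤ 1 → k z ≠ 0)
    (hψ : ∀ z, ‖z‖ ≤ 1 → AnalyticAt ℂ ψ z)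
    (hfd : ∀ z, ‖z‖ < 1 → deriv f z = q z * k z)
    (hΦ : ∀ z, ‖z‖ < 1 → HasDerivAt Φ (q z * ψ z) z)
    (hH : ∀ z, ‖z‖ < 1 → DifferentiableAt ℂ H z)
    (hHΦ : ∀ z, ‖z‖ < 1 → ‖Φ z‖ ^ 2 ≤ (H z).re) (z1 : ℂ) (hz1 : ‖z1‖ < 1) :
    (1 - ‖z1‖ ^ 2) * Real.exp (-(H z1).re - 1) * ‖ψ z1‖ ≤ ‖k z1‖ := by
  set R : ℂ → ℝ := fun z => ‖ψ z / k z‖ * ((1 - ‖f z‖ ^ 2) *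
    Real.exp (‖Φ z‖ ^ 2 + ‖z‖ ^ 2 - (H z).re - 1)) with hR
  have hf1 : ∀ z, ‖z‖ < 1 → ‖f z‖ < 1 := fun z hz => (hfz z hz.le).trans_lt hz
  suffices h : R z1 ≤ 1 by
    have hk1 := norm_pos_iff.2 (hk0 z1 hz1.le)
    have e1 : (1 - ‖z1‖ ^ 2) * Real.exp (-(H z1).re - 1) ≤ (1 - ‖f z1‖ ^ 2) *
      Real.exp (‖Φ z1‖ ^ 2 + ‖z1‖ ^ 2 - (H z1).re - 1) := by
      have := hfz z1 hz1.le
      have := hf1 z1 hz1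
      apply mul_le_mul
      · gcongr
      · apply Real.exp_le_exp.2
        nlinarith [sq_nonneg ‖Φ z1‖, sq_nonneg ‖z1‖]
      · positivity
      · nlinarith [norm_nonneg (f z1)]
    simp only [hR, norm_div] at h
    rw [div_mul_eq_mul_div, div_le_one hk1] at h
    calc _ = ‖ψ z1‖ * ((1 - ‖z1‖ ^ 2) * Real.exp (-(H z1).re - 1)) := by ring
      _ ≤ _ := by gcongr
      _ ≤ _ := h
  by_contra hcon
  push Not at hcon
  -- bound
  obtain ⟨C, hC⟩ := (isCompact_closedBall (0:ℂ) 1).exists_bound_of_continuousOn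
    (f := fun z => ψ z / k z) (fun z hz => by
      have hz' : ‖z‖ ≤ 1 := by simpa using hz
      exact ((hψ z hz').div (hk z hz') (hk0 z hz')).continuousAt.continuousWithinAt)
  have hRC : ∀ z, ‖z‖ < 1 → R z ≤ C * (1 - ‖f z‖ ^ 2) := by
    intro z hz
    have h1 := hC z (by simpa using hz.le)
    have h2 : 0 ≤ 1 - ‖f z‖ ^ 2 := by nlinarith [norm_nonneg (f z), hf1 z hz]
    have h3 : Real.exp (‖Φ z‖ ^ 2 + ‖z‖ ^ 2 - (H z).re - 1) ≤ 1 := by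
      rw [Real.exp_le_one_iff]
      nlinarith [hHΦ z hz, norm_nonneg z]
    simp only [hR]
    apply mul_le_mul h1 _ (by positivity) ((norm_nonneg _).trans h1)
    exact mul_le_of_le_one_right h2 h3
  let K : Set ℂ := closedBall 0 1 ∩ (fun z => C * (1 - ‖f z‖ ^ 2)) ⁻¹' Set.Ici 1
  have hKc : IsCompact K := by
    refine (isCompact_closedBall (0:ℂ) 1).of_isClosed_subset ?_ Set.inter_subset_left
    refine ContinuousOn.preimage_isClosed_of_isClosed ?_ isClosed_closedBall isClosed_Ici
    have : ContinuousOn f (closedBall 0 1) := fun z hz =>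
      (hf z (by simpa using hz)).continuousAt.continuousWithinAt
    fun_prop
  have hKb : ∀ z ∈ K, ‖z‖ < 1 := by
    rintro z ⟨hz, hz2⟩
    have hz' : ‖z‖ ≤ 1 := by simpa using hz
    refine lt_of_le_of_ne hz' fun h => ?_
    simp only [Set.mem_preimage, hfc z h] at hz2
    norm_num at hz2
  have hz1K : z1 ∈ K := ⟨by simpa using hz1.le, hcon.le.trans (hRC z1 hz1)⟩
  have hRcont : ∀ z, ‖z‖ < 1 → ContinuousAt R z := by
    intro z hz
    have c1 := ((hψ z hz.le).div (hk z hz.le) (hk0 z hz.le)).continuousAt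
    have c2 := (hf z hz.le).continuousAt
    have c3 := (hΦ z hz).continuousAt
    have c4 := (hH z hz).continuousAt
    have c5 : ContinuousAt (fun z => (H z).re) z := Complex.continuous_re.continuousAt.comp c4
    have c6 : ContinuousAt (fun z => ψ z / k z) z := c1
    simp only [hR]
    fun_prop
  obtain ⟨z0, hz0K, hmax⟩ := hKc.exists_isMaxOn ⟨z1, hz1K⟩
    (fun z hz => (hRcont z (hKb z hz)).continuousWithinAt)
  have hz0 := hKb z0 hz0K
  have hR0 : 1 < R z0 := hcon.trans_le (hmax hz1K)
  have hnhd : ∀ᶠ z in 𝓝 z0, ‖z‖ < 1 := continuous_norm.continuousAt.eventually (gt_mem_nhds hz0)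
  have hlocmax : ∀ᶠ z in 𝓝 z0, R z ≤ R z0 := by
    filter_upwards [hnhd] with z hz
    by_cases hzK : z ∈ K
    · exact hmax hzK
    · have : ¬ (1 ≤ C * (1 - ‖f z‖ ^ 2)) := fun h => hzK ⟨by simpa using hz.le, h⟩
      linarith [hRC z hz]
  -- factorization
  set a := f z0 with ha
  set b := Φ z0 with hb
  have ha1 : ‖a‖ < 1 := hf1 z0 hz0
  have ha2 : 0 < 1 - ‖a‖ ^ 2 := by nlinarith [norm_nonneg a]
  have hden : ∀ z, ‖z‖ < 1 → 1 - conj a * f z ≠ 0 := by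
    intro z hz h
    have h1 : ‖conj a * f z‖ = 1 := by rw [← sub_eq_zero.1 h]; simp
    rw [norm_mul, RCLike.norm_conj] at h1
    nlinarith [norm_nonneg a, norm_nonneg (f z), hf1 z hz]
  let τ : ℂ → ℂ := fun z => (f z - a) / (1 - conj a * f z)
  let A : ℂ → ℂ := fun z => ψ z / k z * ((1 - conj a * f z) ^ 2 / ((1 - ‖a‖ ^ 2 : ℝ) : ℂ)) *
    Complex.exp (2 * conj b * (Φ z - b) + ((‖b‖ ^ 2 : ℝ) : ℂ) + 2 * conj z0 * (z - z0) + ((‖z0‖ ^ 2 : ℝ) : ℂ) - H z - 1)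
  let E : ℂ → ℝ := fun z => (1 - ‖τ z‖ ^ 2) * Real.exp (‖Φ z - Φ z0‖ ^ 2 + ‖z - z0‖ ^ 2)
  have hRAE : ∀ z, ‖z‖ < 1 → R z = ‖A z‖ * E z := by
    intro z hz
    have hd := hden z hz
    have hd' := norm_pos_iff.2 hd
    have m := mobius_id (f z) a
    have e1 : (1 - ‖f z‖ ^ 2) = (1 - ‖τ z‖ ^ 2) * (‖1 - conj a * f z‖ ^ 2 / (1 - ‖a‖ ^ 2)) := by
      simp only [τ, norm_div]
      generalize ‖1 - conj a * f z‖ = D at m hd'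
      have hD2 : D ^ 2 ≠ 0 := by positivity
      rw [← mul_div_assoc, eq_div_iff ha2.ne', div_pow, ← m, sub_mul (1:ℝ) _ (D ^ 2),
        div_mul_cancel₀ _ hD2, one_mul]
    have e2 : ‖A z‖ = ‖ψ z / k z‖ * (‖1 - conj a * f z‖ ^ 2 / (1 - ‖a‖ ^ 2)) *
        Real.exp ((2 * conj b * (Φ z - b)).re + ‖b‖ ^ 2 + (2 * conj z0 * (z - z0)).re + ‖z0‖ ^ 2 - (H z).re - 1) := by
      simp only [A, norm_mul, Complex.norm_exp]
      rw [norm_div ((1 - conj a * f z) ^ 2), norm_pow, Complex.norm_real, Real.norm_of_nonneg ha2.le]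
      simp only [Complex.add_re, Complex.sub_re, Complex.ofReal_re, Complex.one_re]
    have e3 : ‖Φ z‖ ^ 2 + ‖z‖ ^ 2 - (H z).re - 1 = ((2 * conj b * (Φ z - b)).re + ‖b‖ ^ 2 + (2 * conj z0 * (z - z0)).re + ‖z0‖ ^ 2 - (H z).re - 1) + (‖Φ z - b‖ ^ 2 + ‖z - z0‖ ^ 2) := by
      rw [normSq_expand (Φ z) b, normSq_expand z z0]; ring
    rw [e2]
    simp only [hR, E]
    rw [e1, e3, Real.exp_add]
    ring
  have hAd : ∀ z, ‖z‖ < 1 → DifferentiableAt ℂ A z := by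
    intro z hz
    have d1 := ((hψ z hz.le).differentiableAt.fun_div (hk z hz.le).differentiableAt (hk0 z hz.le))
    have d2 := (hf z hz.le).differentiableAt
    have d3 := (hΦ z hz).differentiableAt
    have d4 := hH z hz
    simp only [A]
    fun_prop
  have hE0 : E z0 = 1 := by simp [E, τ, ← ha]
  have hA0 : A z0 ≠ 0 := by
    intro h
    have := hRAE z0 hz0
    rw [h] at this
    simp at this
    linarith
  have hτ : HasDerivAt τ (deriv f z0 / ((1 - ‖a‖ ^ 2 : ℝ) : ℂ)) z0 := by
    have hfd0 := (hf z0 hz0.le).differentiableAt.hasDerivAt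
    have := (hfd0.sub_const a).fun_div ((hfd0.const_mul (conj a)).const_sub 1) (hden z0 hz0)
    refine this.congr_deriv ?_
    have e : ((1 - ‖a‖ ^ 2 : ℝ) : ℂ) = 1 - conj a * f z0 := by
      rw [← ha, Complex.conj_mul']; push_cast; rfl
    rw [e]
    have := hden z0 hz0
    rw [← ha] at *
    field_simp
    ring
  have hle : ‖deriv f z0 / ((1 - ‖a‖ ^ 2 : ℝ) : ℂ)‖ ≤ ‖q z0 * ψ z0‖ := by
    rw [norm_div, Complex.norm_real, Real.norm_of_nonneg ha2.le, div_le_iff₀ ha2, hfd z0 hz0, norm_mul, norm_mul]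
    rw [mul_assoc]
    gcongr
    have hk1 := norm_pos_iff.2 (hk0 z0 hz0.le)
    have h1 := hR0.le
    simp only [hR, norm_div] at h1
    rw [div_mul_eq_mul_div, one_le_div hk1] at h1
    refine h1.trans ?_
    gcongr
    apply mul_le_of_le_one_right ha2.le
    rw [Real.exp_le_one_iff]
    nlinarith [hHΦ z0 hz0, norm_nonneg z0]
  refine no_local_max_mul A z0 (hnhd.mono hAd) hA0 E (E_gt τ Φ z0 _ _ hτ (hΦ z0 hz0) ?_ hle) hE0 ?_
  · simp [τ, ← ha]
  · filter_upwards [hlocmax, hnhd] with z hz hz2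
    rw [← hRAE z hz2, ← hRAE z0 hz0]; exact hz

lemma circ_bessel (r : ℝ) (hr : 0 < r) (hr1 : r < 1) (N : ℕ) : ∀ (g : ℂ → ℂ)
    (p : FormalMultilinearSeries ℂ ℂ ℂ), DifferentiableOn ℂ g (ball 0 1) → HasFPowerSeriesAt g p 0 →
    ∑ k ∈ Finset.range N, ‖p.coeff k‖ ^ 2 * r ^ (2 * k) ≤ Real.circleAverage (fun z => ‖g z‖ ^ 2) 0 r := by
  have hsub : closedBall (0:ℂ) r ⊆ ball 0 1 := closedBall_subset_ball hr1
  have hsub' : sphere (0:ℂ) |r| ⊆ ball 0 1 := by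
    rw [abs_of_pos hr]; exact sphere_subset_closedBall.trans hsub
  induction N with
  | zero =>
    intro g p hg hp
    simp only [Finset.range_zero, Finset.sum_empty]
    apply Real.circleAverage_nonneg_of_nonneg
    intro x _; positivity
  | succ N ih =>
    intro g p hg hp
    have hb : ball (0:ℂ) 1 ∈ 𝓝 (0:ℂ) := ball_mem_nhds _ one_pos
    have hg1 : DifferentiableOn ℂ (dslope g 0) (ball 0 1) := (Complex.differentiableOn_dslope hb).2 hg
    have h1 := ih (dslope g 0) p.fslope hg1 hp.has_fpower_series_dslope_fslope
    simp only [FormalMultilinearSeries.coeff_fslope] at h1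
    have hp0 : p.coeff 0 = g 0 := by
      rw [← hp.coeff_zero 1]; rfl
    have hci : ∀ u : ℂ → ℝ, ContinuousOn u (ball 0 1) → CircleIntegrable u 0 r := fun u hu =>
      ContinuousOn.circleIntegrable' (hu.mono hsub')
    have hciC : ∀ u : ℂ → ℂ, ContinuousOn u (ball 0 1) → CircleIntegrable u 0 r := fun u hu =>
      ContinuousOn.circleIntegrable' (hu.mono hsub')
    let w : ℂ → ℂ := fun z => 2 * conj (g 0) * (z * dslope g 0 z)
    have hw : DifferentiableOn ℂ w (ball 0 1) := by
      simp only [w]; fun_prop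
    have hw0 : Real.circleAverage w 0 r = 0 := by
      have : DiffContOnCl ℂ w (ball 0 |r|) := by
        apply DifferentiableOn.diffContOnCl
        rw [abs_of_pos hr, closure_ball _ hr.ne']
        exact hw.mono hsub
      rw [this.circleAverage]; simp [w]
    have hwre : Real.circleAverage (fun z => (w z).re) 0 r = 0 := by
      have := Complex.reCLM.circleAverage_comp_comm (hciC w hw.continuousOn)
      rw [hw0] at this
      simpa [Function.comp_def] using this
    have key : Real.circleAverage (fun z => ‖g z‖ ^ 2) 0 r =
        Real.circleAverage (fun z => (r ^ 2 * ‖dslope g 0 z‖ ^ 2 + (w z).re) + ‖g 0‖ ^ 2) 0 r := by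
      apply Real.circleAverage_congr_sphere
      intro z hz
      have hz' : ‖z‖ = r := by simpa [abs_of_pos hr] using hz
      have e := normSq_expand (g z) (g 0)
      have e2 : g z - g 0 = z * dslope g 0 z := by
        have := sub_smul_dslope g 0 z
        simp only [sub_zero, smul_eq_mul] at this
        exact this.symm
      simp only [w]
      rw [e, e2, norm_mul, hz']; ring
    have c1 : ContinuousOn (fun z => r ^ 2 * ‖dslope g 0 z‖ ^ 2) (ball 0 1) := by
      have := hg1.continuousOn; fun_prop
    have c2 : ContinuousOn (fun z => (w z).re) (ball 0 1) :=
      Complex.continuous_re.comp_continuousOn hw.continuousOn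
    rw [key, Real.circleAverage_fun_add (hci _ (c1.fun_add c2)) (hci _ continuousOn_const),
      Real.circleAverage_fun_add (hci _ c1) (hci _ c2), hwre, Real.circleAverage_const]
    have : Real.circleAverage (fun z => r ^ 2 * ‖dslope g 0 z‖ ^ 2) 0 r =
        r ^ 2 * Real.circleAverage (fun z => ‖dslope g 0 z‖ ^ 2) 0 r :=
      Real.circleAverage_fun_smul (a := r ^ 2) (f := fun z => ‖dslope g 0 z‖ ^ 2)
    rw [this, Finset.sum_range_succ', hp0]
    have h2 : ∑ k ∈ Finset.range N, ‖p.coeff (k + 1)‖ ^ 2 * r ^ (2 * (k + 1)) =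
        r ^ 2 * ∑ k ∈ Finset.range N, ‖p.coeff (k + 1)‖ ^ 2 * r ^ (2 * k) := by
      rw [Finset.mul_sum]
      refine Finset.sum_congr rfl fun k _ => ?_
      ring
    rw [h2]
    have := mul_le_mul_of_nonneg_left h1 (sq_nonneg r)
    simp
    linarith

/-- The positive-real-part majorant. -/
lemma exists_majorant (a : ℕ → ℂ) (ha : Summable fun k => ‖a k‖ ^ 2) :
    ∃ H : ℂ → ℂ, (∀ z, ‖z‖ < 1 → DifferentiableAt ℂ H z) ∧
      ∀ z s, ‖z‖ < 1 → HasSum (fun k => a k * z ^ k) s → ‖s‖ ^ 2 ≤ (H z).re := by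
  let F : ℕ × ℕ → ℂ → ℂ := fun q z => 2 * conj (a q.1) * (a (q.1 + q.2) * z ^ q.2)
  let u : ℝ → ℕ × ℕ → ℝ := fun ρ q => ‖a q.1‖ ^ 2 * ρ ^ q.2 + ‖a (q.1 + q.2)‖ ^ 2 * ρ ^ q.2
  have hu : ∀ ρ, 0 ≤ ρ → ρ < 1 → Summable (u ρ) := by
    intro ρ h0 h1
    have s1 : Summable fun q : ℕ × ℕ => ‖a q.1‖ ^ 2 * ρ ^ q.2 :=
      Summable.mul_of_nonneg (f := fun k => ‖a k‖ ^ 2) (g := fun k => ρ ^ k) ha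
        (summable_geometric_of_lt_one h0 h1) (fun k => sq_nonneg _) (fun k => pow_nonneg h0 k)
    refine Summable.add (f := fun q : ℕ × ℕ => ‖a q.1‖ ^ 2 * ρ ^ q.2)
      (g := fun q : ℕ × ℕ => ‖a (q.1 + q.2)‖ ^ 2 * ρ ^ q.2) s1 ?_
    have inj : Function.Injective fun q : ℕ × ℕ => (q.1 + q.2, q.2) := by
      rintro ⟨x, y⟩ ⟨x', y'⟩ h
      simp only [Prod.mk.injEq] at h ⊢
      omega
    have s2 := s1.comp_injective inj
    simpa only [Function.comp_def] using s2
  have hFu : ∀ ρ q z, 0 ≤ ρ → ‖z‖ ≤ ρ → ‖F q z‖ ≤ u ρ q := by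
    intro ρ q z h0 hz
    simp only [F, u, norm_mul, RCLike.norm_conj, norm_pow, RCLike.norm_ofNat]
    have : ‖z‖ ^ q.2 ≤ ρ ^ q.2 := by gcongr
    have h2 : 2 * ‖a q.1‖ * ‖a (q.1 + q.2)‖ ≤ ‖a q.1‖ ^ 2 + ‖a (q.1 + q.2)‖ ^ 2 := two_mul_le_add_sq _ _
    calc _ = (2 * ‖a q.1‖ * ‖a (q.1 + q.2)‖) * ‖z‖ ^ q.2 := by ring
      _ ≤ (‖a q.1‖ ^ 2 + ‖a (q.1 + q.2)‖ ^ 2) * ρ ^ q.2 := by gcongr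
      _ = _ := by ring
  let S : ℂ := ((∑' k, ‖a k‖ ^ 2 : ℝ) : ℂ)
  refine ⟨fun z => ∑' q, F q z - S, ?_, ?_⟩
  · intro z hz
    obtain ⟨ρ, h1, h2⟩ := exists_between hz
    have h0 : 0 ≤ ρ := (norm_nonneg z).trans h1.le
    have := Complex.differentiableOn_tsum_of_summable_norm (F := F) (U := ball 0 ρ) (hu ρ h0 h2)
      (fun q => by simp only [F]; fun_prop) isOpen_ball
      (fun q w hw => hFu ρ q w h0 (by simp at hw; exact hw.le))
    exact (this.differentiableAt (isOpen_ball.mem_nhds (by simpa using h1))).sub_const _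
  · intro z s hz hs
    have hsumF : Summable fun q => F q z :=
      Summable.of_norm_bounded (hu ‖z‖ (norm_nonneg z) hz) (fun q => hFu ‖z‖ q z (norm_nonneg z) le_rfl)
    -- tails
    let y : ℕ → ℂ := fun k => ∑' j, a (k + j) * z ^ j
    obtain ⟨B, hB⟩ : ∃ B, ∀ k, ‖a k‖ ≤ B := by
      have h1 := ha.tendsto_atTop_zero
      obtain ⟨B, hB⟩ := h1.bddAbove_range
      refine ⟨B + 1, fun k => ?_⟩
      have := hB ⟨k, rfl⟩
      simp only at this
      nlinarith [norm_nonneg (a k), sq_nonneg (‖a k‖ - 1)]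
    have hysum : ∀ k, Summable fun j => a (k + j) * z ^ j := by
      intro k
      refine Summable.of_norm_bounded (g := fun j => B * ‖z‖ ^ j)
        ((summable_geometric_of_lt_one (norm_nonneg z) hz).mul_left B) fun j => ?_
      rw [norm_mul, norm_pow]
      gcongr
      exact hB _
    have hyrec : ∀ k, y k = a k + z * y (k + 1) := by
      intro k
      simp only [y]
      rw [(hysum k).tsum_eq_zero_add, ← tsum_mul_left]
      simp only [add_zero, pow_zero, mul_one]
      congr 1
      refine tsum_congr fun j => ?_
      rw [show k + (j + 1) = k + 1 + j by ring]; ring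
    have hy0 : y 0 = s := by
      simp only [y, zero_add]; exact hs.tsum_eq
    have hylim : Tendsto y atTop (𝓝 0) := by
      have ha0 : Tendsto (fun k => ‖a k‖) atTop (𝓝 0) := by
        have := ha.tendsto_atTop_zero.sqrt
        simpa using this
      have h := tendsto_tsum_of_dominated_convergence (𝓕 := atTop) (f := fun k j => a (k + j) * z ^ j)
        (g := fun _ => (0:ℂ)) (bound := fun j => B * ‖z‖ ^ j)
        ((summable_geometric_of_lt_one (norm_nonneg z) hz).mul_left B)
        (by
          intro j
          have h1 : Tendsto (fun k => a (k + j)) atTop (𝓝 0) :=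
            (tendsto_zero_iff_norm_tendsto_zero.2 ha0).comp (tendsto_add_atTop_nat j)
          simpa using h1.mul_const (z ^ j))
        (by
          refine Eventually.of_forall fun k j => ?_
          rw [norm_mul, norm_pow]
          gcongr
          exact hB _)
      simpa using h
    have hH : HasSum (fun k => 2 * conj (a k) * y k) (∑' q, F q z) := by
      have h1 := hsumF.hasSum.prod_fiberwise (g := fun k => 2 * conj (a k) * y k) (fun k => by
        simp only [F]
        exact (hysum k).hasSum.mul_left _)
      exact h1
    have hS : HasSum (fun k => ((‖a k‖ ^ 2 : ℝ) : ℂ)) S := Complex.hasSum_ofReal.2 ha.hasSum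
    have hre : HasSum (fun k => (2 * conj (a k) * y k - ((‖a k‖ ^ 2 : ℝ) : ℂ)).re) (∑' q, F q z - S).re :=
      Complex.hasSum_re (hH.sub hS)
    have hterm : ∀ k, (2 * conj (a k) * y k - ((‖a k‖ ^ 2 : ℝ) : ℂ)).re =
        ‖y k‖ ^ 2 - ‖z‖ ^ 2 * ‖y (k + 1)‖ ^ 2 := by
      intro k
      have : a k = y k - z * y (k + 1) := by rw [hyrec k]; ring
      rw [← mul_pow, ← norm_mul, this]
      simp only [Complex.sq_norm, Complex.normSq_apply]
      simp
      ring
    have hpart : ∀ K, ‖y 0‖ ^ 2 - ‖y K‖ ^ 2 ≤ ∑ k ∈ Finset.range K,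
        (2 * conj (a k) * y k - ((‖a k‖ ^ 2 : ℝ) : ℂ)).re := by
      intro K
      induction K with
      | zero => simp
      | succ K ih =>
        rw [Finset.sum_range_succ, hterm]
        have : ‖z‖ ^ 2 * ‖y (K + 1)‖ ^ 2 ≤ ‖y (K + 1)‖ ^ 2 := by
          apply mul_le_of_le_one_left (by positivity)
          nlinarith [norm_nonneg z]
        linarith
    have l1 : Tendsto (fun K => ‖y 0‖ ^ 2 - ‖y K‖ ^ 2) atTop (𝓝 (‖y 0‖ ^ 2)) := by
      have := (hylim.norm.pow 2).const_sub (‖y 0‖ ^ 2)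
      simpa using this
    have := le_of_tendsto_of_tendsto' l1 hre.tendsto_sum_nat hpart
    rw [hy0] at this
    exact this

lemma circle_int (φ : ℂ → ℂ) (r : ℝ) :
    ∫ θ in (-Real.pi)..Real.pi, ‖φ (circleMap 0 r θ)‖ ^ 2 =
      2 * Real.pi * Real.circleAverage (fun z => ‖φ z‖ ^ 2) 0 r := by
  rw [Real.circleAverage_eq_integral_add (-Real.pi)]
  rw [intervalIntegral.integral_comp_add_right (fun θ => ‖φ (circleMap 0 r θ)‖ ^ 2)]
  rw [smul_eq_mul, ← mul_assoc, mul_inv_cancel₀ (by positivity), one_mul]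
  congr 1 <;> ring

lemma poly_int (k : ℕ) : ∫ r in (0:ℝ)..1, (2 * Real.pi * (r * (1 - r ^ 2))) * r ^ (2 * k) =
    Real.pi / ((k + 1) * (k + 2)) := by
  have : ∀ r : ℝ, (2 * Real.pi * (r * (1 - r ^ 2))) * r ^ (2 * k) =
      2 * Real.pi * (r ^ (2 * k + 1) - r ^ (2 * k + 3)) := by intro r; ring
  simp only [this]
  rw [intervalIntegral.integral_const_mul, intervalIntegral.integral_sub (by simp) (by simp),
    integral_pow, integral_pow]
  simp
  field_simp
  ring

lemma bergman_coeff (φ : ℂ → ℂ) (hφ : DifferentiableOn ℂ φ (ball 0 1))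
    (hphiint : IntegrableOn (fun z : ℂ => (1 - ‖z‖ ^ 2) * ‖φ z‖ ^ 2) (ball 0 1) volume)
    (p : FormalMultilinearSeries ℂ ℂ ℂ) (hp : HasFPowerSeriesAt φ p 0) :
    Summable fun k : ℕ => ‖p.coeff k‖ ^ 2 * (Real.pi / ((k + 1) * (k + 2))) := by
  let G : ℂ → ENNReal := (ball 0 1).indicator fun z => ENNReal.ofReal ((1 - ‖z‖ ^ 2) * ‖φ z‖ ^ 2)
  have hG : ∫⁻ z, G z ≠ ⊤ := by
    simp only [G]
    rw [lintegral_indicator measurableSet_ball]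
    have := hphiint.2
    rw [hasFiniteIntegral_iff_ofReal] at this
    · exact this.ne
    · filter_upwards [ae_restrict_mem measurableSet_ball] with z hz
      have : ‖z‖ < 1 := by simpa using hz
      have : 0 ≤ 1 - ‖z‖ ^ 2 := by nlinarith [norm_nonneg z]
      simp only [Pi.zero_apply]
      positivity
  let u : ℝ × ℝ → ℝ := fun q => q.1 * (1 - q.1 ^ 2) * ‖φ (circleMap 0 q.1 q.2)‖ ^ 2
  have hcm : ∀ q : ℝ × ℝ, q.1 ∈ Set.Ioo (0:ℝ) 1 → circleMap 0 q.1 q.2 ∈ ball (0:ℂ) 1 := by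
    intro q hq
    simp [abs_of_pos hq.1, hq.2]
  have h1 : ∫⁻ q in Set.Ioo (0:ℝ) 1 ×ˢ Set.Ioo (-Real.pi) Real.pi, ENNReal.ofReal (u q) ≤ ∫⁻ z, G z := by
    rw [← Complex.lintegral_comp_polarCoord_symm]
    refine le_trans (le_of_eq ?_) (lintegral_mono_set (s := Set.Ioo (0:ℝ) 1 ×ˢ Set.Ioo (-Real.pi) Real.pi) ?_)
    · apply setLIntegral_congr_fun (measurableSet_Ioo.prod measurableSet_Ioo)
      rintro q ⟨hq1, hq2⟩
      have e : Complex.polarCoord.symm q = circleMap 0 q.1 q.2 := by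
        rw [Complex.polarCoord_symm_apply, circleMap, Complex.exp_mul_I]; simp
      have hn : ‖circleMap 0 q.1 q.2‖ = q.1 := by simp [abs_of_pos hq1.1]
      simp only [G]
      rw [e, Set.indicator_of_mem (hcm q hq1), smul_eq_mul, ← ENNReal.ofReal_mul hq1.1.le, hn]
      simp only [u]
      ring_nf
    · rw [polarCoord_target]
      exact Set.prod_mono (fun x hx => hx.1) le_rfl
  have hcont : ContinuousOn (fun q : ℝ × ℝ => φ (circleMap 0 q.1 q.2)) (Set.Ioo (0:ℝ) 1 ×ˢ Set.univ) := by
    refine hφ.continuousOn.comp (Continuous.continuousOn ?_) (fun q hq => hcm q hq.1)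
    unfold circleMap
    fun_prop
  have hucont : ContinuousOn u (Set.Ioo (0:ℝ) 1 ×ˢ Set.univ) := by
    have c1 : ContinuousOn (fun q : ℝ × ℝ => q.1 * (1 - q.1 ^ 2)) (Set.Ioo (0:ℝ) 1 ×ˢ Set.univ) :=
      Continuous.continuousOn (by fun_prop)
    exact c1.mul (hcont.norm.pow 2)
  have h2 : ∫⁻ q in Set.Ioo (0:ℝ) 1 ×ˢ Set.Ioo (-Real.pi) Real.pi, ENNReal.ofReal (u q) =
      ∫⁻ r in Set.Ioo (0:ℝ) 1, ∫⁻ θ in Set.Ioo (-Real.pi) Real.pi, ENNReal.ofReal (u (r, θ)) := by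
    rw [Measure.volume_eq_prod, ← Measure.prod_restrict, lintegral_prod]
    rw [Measure.prod_restrict]
    apply AEMeasurable.ennreal_ofReal
    apply ContinuousOn.aemeasurable (hucont.mono (Set.prod_mono le_rfl (Set.subset_univ _)))
      (measurableSet_Ioo.prod measurableSet_Ioo)
  have hpi : -Real.pi ≤ Real.pi := by linarith [Real.pi_pos]
  have key : ∀ N : ℕ, ENNReal.ofReal (∑ k ∈ Finset.range N, ‖p.coeff k‖ ^ 2 * (Real.pi / ((k + 1) * (k + 2))))
      ≤ ∫⁻ z, G z := by
    intro N
    refine le_trans ?_ h1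
    rw [h2]
    let v : ℝ → ℝ := fun r => ∑ k ∈ Finset.range N, ‖p.coeff k‖ ^ 2 * ((2 * Real.pi * (r * (1 - r ^ 2))) * r ^ (2 * k))
    have hvc : Continuous v := by simp only [v]; fun_prop
    have e1 : ∑ k ∈ Finset.range N, ‖p.coeff k‖ ^ 2 * (Real.pi / ((k + 1) * (k + 2))) =
        ∫ r in Set.Ioo (0:ℝ) 1, v r := by
      rw [← integral_Ioc_eq_integral_Ioo, ← intervalIntegral.integral_of_le zero_le_one]
      simp only [v]
      rw [intervalIntegral.integral_finsetSum]
      · refine Finset.sum_congr rfl fun k _ => ?_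
        rw [intervalIntegral.integral_const_mul, poly_int]
      · intro k _
        apply Continuous.intervalIntegrable
        fun_prop
    rw [e1, ofReal_integral_eq_lintegral_ofReal]
    · apply setLIntegral_mono' measurableSet_Ioo
      intro r hr
      have hnn : 0 ≤ r * (1 - r ^ 2) := mul_nonneg hr.1.le (by nlinarith [hr.1, hr.2])
      have hcr : Continuous fun θ => u (r, θ) := by
        have := hucont.comp_continuous (f := fun θ : ℝ => (r, θ)) (by fun_prop)
          (fun θ => ⟨hr, Set.mem_univ _⟩)
        exact this
      rw [← ofReal_integral_eq_lintegral_ofReal]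
      · apply ENNReal.ofReal_le_ofReal
        rw [← integral_Ioc_eq_integral_Ioo, ← intervalIntegral.integral_of_le hpi]
        simp only [u]
        rw [intervalIntegral.integral_const_mul, circle_int]
        have := circ_bessel r hr.1 hr.2 N φ p hφ hp
        have h3 := mul_le_mul_of_nonneg_left this (mul_nonneg hnn (by positivity : (0:ℝ) ≤ 2 * Real.pi))
        refine le_trans (le_of_eq ?_) (h3.trans (le_of_eq (by ring)))
        simp only [v]
        rw [Finset.mul_sum]
        refine Finset.sum_congr rfl fun k _ => ?_
        ring
      · exact (hcr.integrableOn_Icc (a := -Real.pi) (b := Real.pi)).mono_set Set.Ioo_subset_Icc_self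
      · refine Eventually.of_forall fun θ => ?_
        simp only [u, Pi.zero_apply]
        positivity
    · exact (hvc.integrableOn_Icc (a := 0) (b := 1)).mono_set Set.Ioo_subset_Icc_self
    · filter_upwards [ae_restrict_mem measurableSet_Ioo] with r hr
      simp only [v, Pi.zero_apply]
      have hnn : 0 ≤ r * (1 - r ^ 2) := mul_nonneg hr.1.le (by nlinarith [hr.1, hr.2])
      have := hr.1.le
      positivity
  refine summable_of_sum_range_le (c := (∫⁻ z, G z).toReal) (fun k => by positivity) fun N => ?_
  exact (ENNReal.ofReal_le_iff_le_toReal hG).1 (key N)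

theorem exists_prim_majorant (φ : ℂ → ℂ) (hφ : DifferentiableOn ℂ φ (ball 0 1))
    (hphiint : IntegrableOn (fun z : ℂ => (1 - ‖z‖ ^ 2) * ‖φ z‖ ^ 2) (ball 0 1) volume) :
    ∃ Φ H : ℂ → ℂ, (∀ z, ‖z‖ < 1 → HasDerivAt Φ (φ z) z) ∧ (∀ z, ‖z‖ < 1 → DifferentiableAt ℂ H z) ∧
      ∀ z, ‖z‖ < 1 → ‖Φ z‖ ^ 2 ≤ (H z).re := by
  obtain ⟨Φ, hΦ⟩ := hφ.isExactOn_ball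
  have hΦd : DifferentiableOn ℂ Φ (ball 0 1) := fun z hz => (hΦ z hz).differentiableAt.differentiableWithinAt
  have h0 : ball (0:ℂ) 1 ∈ 𝓝 (0:ℂ) := ball_mem_nhds _ one_pos
  have hp := (hφ.analyticAt h0).hasFPowerSeriesAt
  have hs := bergman_coeff φ hφ hphiint _ hp
  simp only [FormalMultilinearSeries.coeff_ofScalars] at hs
  let a : ℕ → ℂ := fun k => iteratedDeriv k Φ 0 / (k.factorial : ℂ)
  have ha1 : ∀ k, a (k + 1) = iteratedDeriv k φ 0 / (k.factorial : ℂ) / (k + 1) := by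
    intro k
    simp only [a]
    have : iteratedDeriv (k + 1) Φ 0 = iteratedDeriv k φ 0 := by
      rw [iteratedDeriv_succ']
      apply Filter.EventuallyEq.iteratedDeriv_eq
      filter_upwards [h0] with z hz
      exact (hΦ z hz).deriv
    rw [this, Nat.factorial_succ]
    push_cast
    rw [div_div, mul_comm]
  have ha : Summable fun k => ‖a k‖ ^ 2 := by
    rw [← summable_nat_add_iff 1]
    refine Summable.of_nonneg_of_le (fun k => by positivity) (fun k => ?_) (hs.mul_left 2)
    rw [ha1, norm_div, div_pow]
    have e : ‖(k:ℂ) + 1‖ = k + 1 := by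
      rw [← Nat.cast_succ, Complex.norm_natCast]; push_cast; rfl
    rw [e, ← mul_assoc, mul_comm (2:ℝ), mul_assoc, div_eq_mul_inv]
    gcongr
    rw [← one_div, ← mul_div_assoc, div_le_div_iff₀ (by positivity) (by positivity)]
    have := Real.pi_gt_three
    nlinarith [Nat.cast_nonneg (α := ℝ) k]
  obtain ⟨H, hH1, hH2⟩ := exists_majorant a ha
  refine ⟨Φ, H, fun z hz => hΦ z (by simpa using hz), hH1, fun z hz => hH2 z _ hz ?_⟩
  have := Complex.hasSum_taylorSeries_on_ball hΦd (z := z) (by simpa using hz)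
  have e : (fun k => a k * z ^ k) = fun n : ℕ => ((n.factorial : ℕ) : ℂ)⁻¹ • (z - 0) ^ n • iteratedDeriv n Φ 0 := by
    funext k
    simp only [a, sub_zero, smul_eq_mul]
    ring
  rw [e]
  exact this

lemma factor_finset (φ : ℂ → ℂ) (hφ : ∀ z, ‖z‖ ≤ 1 → AnalyticAt ℂ φ z)
    (hne : ∀ z, ‖z‖ ≤ 1 → ¬ ∀ᶠ w in 𝓝 z, φ w = 0) (S : Finset ℂ) (hS : ∀ z ∈ S, ‖z‖ < 1) :
    ∃ (Q : Polynomial ℂ) (ψ : ℂ → ℂ), Q ≠ 0 ∧ (∀ z, Q.eval z = 0 → ‖z‖ < 1) ∧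
      (∀ z, ‖z‖ ≤ 1 → AnalyticAt ℂ ψ z) ∧ (∀ z ∈ S, ψ z ≠ 0) ∧ ∀ z, φ z = Q.eval z * ψ z := by
  classical
  induction S using Finset.induction_on with
  | empty => exact ⟨1, φ, one_ne_zero, by simp, hφ, by simp, by simp⟩
  | insert a S haS ih =>
    obtain ⟨Q, ψ, hQ, hQr, hψ, hψS, hfac⟩ := ih fun z hz => hS z (Finset.mem_insert_of_mem hz)
    have ha := hS a (Finset.mem_insert_self _ _)
    have hord : analyticOrderAt ψ a ≠ ⊤ := by
      intro h
      rw [analyticOrderAt_eq_top] at h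
      apply hne a ha.le
      filter_upwards [h] with w hw
      rw [hfac, hw, mul_zero]
    obtain ⟨g, hg, hga, hev⟩ := (hψ a ha.le).analyticOrderAt_ne_top.1 hord
    set m := analyticOrderNatAt ψ a with hm
    simp only [smul_eq_mul] at hev
    let ψ' : ℂ → ℂ := fun z => if z = a then g a else ψ z / (z - a) ^ m
    have hψ'a : ψ' =ᶠ[𝓝 a] g := by
      filter_upwards [hev] with z hz
      by_cases h : z = a
      · simp [ψ', h]
      · simp only [ψ', if_neg h]
        rw [hz, mul_div_cancel_left₀]
        exact pow_ne_zero _ (sub_ne_zero.2 h)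
    refine ⟨Q * (Polynomial.X - Polynomial.C a) ^ m, ψ',
      mul_ne_zero hQ (pow_ne_zero _ (Polynomial.X_sub_C_ne_zero a)), ?_, ?_, ?_, ?_⟩
    · intro z hz
      simp only [Polynomial.eval_mul, Polynomial.eval_pow, Polynomial.eval_sub, Polynomial.eval_X,
        Polynomial.eval_C] at hz
      rcases mul_eq_zero.1 hz with h | h
      · exact hQr z h
      · have := sub_eq_zero.1 (eq_zero_of_pow_eq_zero h)
        rw [this]; exact ha
    · intro z hz
      by_cases h : z = a
      · rw [h]; exact hg.congr hψ'a.symm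
      · have h1 : AnalyticAt ℂ (fun z => ψ z / (z - a) ^ m) z :=
          (hψ z hz).div ((analyticAt_id.sub analyticAt_const).pow m) (pow_ne_zero _ (sub_ne_zero.2 h))
        refine h1.congr ?_
        filter_upwards [isOpen_ne.mem_nhds h] with w hw
        have hw' : w ≠ a := hw
        simp [ψ', hw']
    · intro z hz
      by_cases h : z = a
      · simp [ψ', h, hga]
      · have hzS : z ∈ S := (Finset.mem_insert.1 hz).resolve_left h
        simp only [ψ', if_neg h]
        exact div_ne_zero (hψS z hzS) (pow_ne_zero _ (sub_ne_zero.2 h))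
    · intro z
      simp only [Polynomial.eval_mul, Polynomial.eval_pow, Polynomial.eval_sub, Polynomial.eval_X,
        Polynomial.eval_C]
      rw [hfac, mul_assoc]
      congr 1
      by_cases h : z = a
      · rw [h, hev.self_of_nhds]; simp [ψ']
      · simp only [ψ', if_neg h]
        rw [mul_div_cancel₀]
        exact pow_ne_zero _ (sub_ne_zero.2 h)

lemma factor (φ : ℂ → ℂ) (hφ : ∀ z, ‖z‖ ≤ 1 → AnalyticAt ℂ φ z)
    (hne : ∃ z, ‖z‖ ≤ 1 ∧ φ z ≠ 0) :
    ∃ (Q : Polynomial ℂ) (ψ : ℂ → ℂ), Q ≠ 0 ∧ (∀ z, Q.eval z = 0 → ‖z‖ < 1) ∧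
      (∀ z, ‖z‖ ≤ 1 → AnalyticAt ℂ ψ z) ∧ (∀ z, ‖z‖ < 1 → ψ z ≠ 0) ∧ ∀ z, φ z = Q.eval z * ψ z := by
  obtain ⟨z1, hz1, hz1'⟩ := hne
  have han : AnalyticOnNhd ℂ φ (closedBall 0 1) := fun z hz => hφ z (by simpa using hz)
  have hpre : IsPreconnected (closedBall (0:ℂ) 1) := (convex_closedBall 0 1).isPreconnected
  have hfreq : ∀ z ∈ closedBall (0:ℂ) 1, ¬ ∃ᶠ w in 𝓝[≠] z, φ w = 0 := by
    intro z hz h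
    exact hz1' (han.eqOn_zero_of_preconnected_of_frequently_eq_zero hpre hz h (by simpa using hz1))
  have hfin : (closedBall (0:ℂ) 1 ∩ {z | φ z = 0}).Finite := by
    by_contra hinf
    obtain ⟨z, hz, hacc⟩ := Set.Infinite.exists_accPt_of_subset_isCompact hinf
      (isCompact_closedBall (0:ℂ) 1) Set.inter_subset_left
    apply hfreq z hz
    rw [accPt_iff_frequently_nhdsNE] at hacc
    exact hacc.mono fun w hw => hw.2
  have hfin2 : (ball (0:ℂ) 1 ∩ {z | φ z = 0}).Finite :=
    hfin.subset (Set.inter_subset_inter_left _ ball_subset_closedBall)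
  obtain ⟨Q, ψ, h1, h2, h3, h4, h5⟩ := factor_finset φ hφ (by
    intro z hz h
    apply hfreq z (by simpa using hz)
    exact (h.filter_mono nhdsWithin_le_nhds).frequently) hfin2.toFinset (by
    intro z hz; simp at hz; exact hz.1)
  refine ⟨Q, ψ, h1, h2, h3, fun z hz h => ?_, h5⟩
  refine h4 z ?_ h
  simp only [Set.Finite.mem_toFinset]
  exact ⟨by simpa using hz, by simp [h5, h]⟩

theorem per_r (φ Φ H : ℂ → ℂ) (hφ : DifferentiableOn ℂ φ (ball 0 1))
    (hΦ : ∀ z, ‖z‖ < 1 → HasDerivAt Φ (φ z) z) (hH : ∀ z, ‖z‖ < 1 → DifferentiableAt ℂ H z)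
    (hHΦ : ∀ z, ‖z‖ < 1 → ‖Φ z‖ ^ 2 ≤ (H z).re) (hne : ∃ z ∈ ball (0:ℂ) 1, φ z ≠ 0)
    (r : ℝ) (hr : 0 < r) (hr1 : r < 1) :
    ∃ f g : ℂ → ℂ, (∀ z, ‖z‖ < 1 → DifferentiableAt ℂ f z) ∧ (∀ z, ‖z‖ < 1 → ‖f z‖ ≤ 1) ∧
      (∀ z, ‖z‖ < 1 → DifferentiableAt ℂ g z) ∧
      (∀ z, ‖z‖ < 1 → deriv f z = r * φ (r * z) * g z) ∧
      ∀ z, ‖z‖ < 1 → (1 - ‖z‖ ^ 2) * Real.exp (-(H (r * z)).re - 1) ≤ ‖g z‖ := by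
  have hrz : ∀ z : ℂ, ‖z‖ ≤ 1 → ‖(r:ℂ) * z‖ < 1 := by
    intro z hz
    rw [norm_mul, Complex.norm_real, Real.norm_of_nonneg hr.le]
    nlinarith [norm_nonneg z]
  have han : AnalyticOnNhd ℂ φ (ball 0 1) := hφ.analyticOnNhd isOpen_ball
  obtain ⟨Q, ψ, hQ, hQr, hψ, hψ0, hfac⟩ := factor (fun z => r * φ (r * z)) (by
    intro z hz
    have h1 : AnalyticAt ℂ φ (r * z) := han _ (by simpa using hrz z hz)
    have h2 : AnalyticAt ℂ (fun z : ℂ => (r:ℂ) * z) z := analyticAt_const.mul analyticAt_id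
    exact analyticAt_const.mul (h1.comp' h2)) (by
    by_contra hcon
    push Not at hcon
    obtain ⟨z1, hz1, hz1'⟩ := hne
    apply hz1'
    refine han.eqOn_zero_of_preconnected_of_eventuallyEq_zero (convex_ball 0 1).isPreconnected
      (z₀ := 0) (by simp) ?_ hz1
    filter_upwards [ball_mem_nhds (0:ℂ) hr] with w hw
    have hw' : ‖w‖ < r := by simpa using hw
    have hrC : (r:ℂ) ≠ 0 := by exact_mod_cast hr.ne'
    have := hcon (w / r) (by
      rw [norm_div, Complex.norm_real, Real.norm_of_nonneg hr.le]
      exact div_le_one_of_le₀ hw'.le hr.le)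
    rw [mul_div_cancel₀ _ hrC] at this
    exact (mul_eq_zero.1 this).resolve_left hrC)
  obtain ⟨f, k, hf, hfz, hfc, hk, hk0, hfd⟩ := finite_blaschke Q hQ hQr
  have hchain : ∀ z : ℂ, HasDerivAt (fun z : ℂ => (r:ℂ) * z) r z := by
    intro z
    simpa using (hasDerivAt_id z).const_mul (r:ℂ)
  have hcomp := comparison f k ψ (fun z => Φ (r * z)) (fun z => H (r * z)) (fun z => Q.eval z) hf hfz hfc hk hk0 hψ
    (fun z hz => hfd z hz.le) (by
      intro z hz
      rw [← hfac]
      have := (hΦ (r * z) (hrz z hz.le)).comp z (hchain z)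
      rw [mul_comm] at this
      exact this) (by
      intro z hz
      exact (hH (r * z) (hrz z hz.le)).comp z (hchain z).differentiableAt) (fun z hz => hHΦ _ (hrz z hz.le))
  refine ⟨f, fun z => k z / ψ z, fun z hz => (hf z hz.le).differentiableAt,
    fun z hz => (hfz z hz.le).trans hz.le,
    fun z hz => (hk z hz.le).differentiableAt.fun_div (hψ z hz.le).differentiableAt (hψ0 z hz), ?_, ?_⟩
  · intro z hz
    rw [hfd z hz.le, hfac]
    have := hψ0 z hz
    field_simp
  · intro z hz
    rw [norm_div, le_div_iff₀ (norm_pos_iff.2 (hψ0 z hz))]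
    exact hcomp z hz

theorem vOrder_eq_analyticOrderAt {F : ℂ → ℂ} {z : ℂ} (hF : AnalyticAt ℂ F z) :
    vOrder F z = analyticOrderAt F z := by
  have key : ∀ n : ℕ, (n : ℕ∞) ≤ vOrder F z ↔ (n : ℕ∞) ≤ analyticOrderAt F z := by
    intro n
    rw [natCast_le_analyticOrderAt_iff_iteratedDeriv_eq_zero hF, vOrder, le_sInf_iff]
    constructor
    · intro h i hi
      by_contra hne
      have := h (i : ℕ∞) ⟨i, hne, rfl⟩
      have := Nat.cast_le.mp this
      omega
    · rintro h _ ⟨m, hm, rfl⟩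
      by_contra hlt
      have hlt' : (m : ℕ∞) < n := not_le.mp hlt
      exact hm (h m (by exact_mod_cast hlt'))
  apply le_antisymm
  · exact ENat.forall_natCast_le_iff_le.mp fun n hn => (key n).mp hn
  · exact ENat.forall_natCast_le_iff_le.mp fun n hn => (key n).mpr hn

theorem analyticOrderAt_le_of_bound {F φ : ℂ → ℂ} {a : ℂ} (hF : AnalyticAt ℂ F a)
    (hφ : AnalyticAt ℂ φ a) (C : ℝ) (h : ∀ᶠ z in 𝓝 a, ‖F z‖ ≤ C * ‖φ z‖) :
    analyticOrderAt φ a ≤ analyticOrderAt F a := by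
  refine ENat.forall_natCast_le_iff_le.mp fun n hn => ?_
  by_contra hlt
  obtain ⟨m, hm⟩ := ENat.ne_top_iff_exists.mp (ne_top_of_lt (not_le.mp hlt))
  rw [← hm] at hlt
  have hmn : m < n := by exact_mod_cast not_le.mp hlt
  obtain ⟨g, hg, hge⟩ := (natCast_le_analyticOrderAt hφ).mp hn
  obtain ⟨k, hk, hk0, hke⟩ := (hF.analyticOrderAt_eq_natCast).mp hm.symm
  have h1 : ∀ᶠ z in 𝓝[≠] a, ‖k z‖ ≤ C * (‖z - a‖ ^ (n - m) * ‖g z‖) := by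
    have : ∀ᶠ z in 𝓝[≠] a, z ≠ a := eventually_mem_nhdsWithin
    filter_upwards [this, nhdsWithin_le_nhds h, nhdsWithin_le_nhds hge,
      nhdsWithin_le_nhds hke] with z hz h1 h2 h3
    rw [h2, h3, norm_smul, norm_smul, norm_pow, norm_pow] at h1
    have hp : 0 < ‖z - a‖ := norm_pos_iff.mpr (sub_ne_zero.mpr hz)
    have hn' : ‖z - a‖ ^ n = ‖z - a‖ ^ m * ‖z - a‖ ^ (n - m) := by
      rw [← pow_add]; congr 1; omega
    rw [hn'] at h1
    refine le_of_mul_le_mul_left ?_ (pow_pos hp m)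
    linarith [h1]
  have h2 : Tendsto (fun z => ‖k z‖) (𝓝[≠] a) (𝓝 ‖k a‖) :=
    (hk.continuousAt.norm.tendsto).mono_left nhdsWithin_le_nhds
  have h3 : Tendsto (fun z => C * (‖z - a‖ ^ (n - m) * ‖g z‖)) (𝓝[≠] a)
      (𝓝 (C * (‖a - a‖ ^ (n - m) * ‖g a‖))) := by
    have : ContinuousAt (fun z => C * (‖z - a‖ ^ (n - m) * ‖g z‖)) a := by
      have := hg.continuousAt
      fun_prop
    exact this.tendsto.mono_left nhdsWithin_le_nhds
  have h4 := le_of_tendsto_of_tendsto h2 h3 h1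
  rw [sub_self, norm_zero, zero_pow (by omega : n - m ≠ 0)] at h4
  simp only [zero_mul, mul_zero] at h4
  exact hk0 (norm_le_zero_iff.mp h4)

theorem deriv_bound {f : ℂ → ℂ} (hf : ∀ z, ‖z‖ < 1 → DifferentiableAt ℂ f z)
    (hb : ∀ z, ‖z‖ < 1 → ‖f z‖ ≤ 1) {z : ℂ} {R : ℝ} (hR : 0 < R) (hz : ‖z‖ + R < 1) :
    ‖deriv f z‖ ≤ 1 / R := by
  have hin : ∀ w ∈ closedBall z R, ‖w‖ < 1 := by
    intro w hw
    rw [mem_closedBall, dist_eq_norm] at hw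
    have : ‖w‖ ≤ ‖w - z‖ + ‖z‖ := by simpa using norm_add_le (w - z) z
    linarith
  refine Complex.norm_deriv_le_of_forall_mem_sphere_norm_le hR ?_
    fun w hw => hb w (hin w (sphere_subset_closedBall hw))
  exact DifferentiableOn.diffContOnCl_ball (U := closedBall z R)
    (fun w hw => (hf w (hin w hw)).differentiableWithinAt) subset_rfl

theorem montel_ultra (f : ℕ → ℂ → ℂ) (hf : ∀ i z, ‖z‖ < 1 → DifferentiableAt ℂ (f i) z)
    (hb : ∀ i z, ‖z‖ < 1 → ‖f i z‖ ≤ 1) :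
    ∃ F : ℂ → ℂ, (∀ z, ‖z‖ < 1 → ‖F z‖ ≤ 1) ∧
      TendstoLocallyUniformlyOn f F (hyperfilter ℕ : Filter ℕ) (ball 0 1) := by
  have hpt : ∀ z : ℂ, ∃ w : ℂ, ‖z‖ < 1 → ‖w‖ ≤ 1 ∧
      Tendsto (fun i => f i z) (hyperfilter ℕ : Filter ℕ) (𝓝 w) := by
    intro z
    by_cases hz : ‖z‖ < 1
    · obtain ⟨w, hw, hlim⟩ := (isCompact_closedBall (0 : ℂ) 1).ultrafilter_le_nhds'
        ((hyperfilter ℕ).map (fun i => f i z))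
        (by
          rw [Ultrafilter.mem_map]
          exact Eventually.of_forall fun i => by simpa using hb i z hz)
      exact ⟨w, fun _ => ⟨by simpa using hw, hlim⟩⟩
    · exact ⟨0, fun h => absurd h hz⟩
  choose F hF using hpt
  refine ⟨F, fun z hz => (hF z hz).1, ?_⟩
  rw [Metric.tendstoLocallyUniformlyOn_iff]
  intro ε hε a ha
  have ha' : ‖a‖ < 1 := by simpa using ha
  set R := (1 - ‖a‖) / 2 with hRdef
  have hR : 0 < R := by rw [hRdef]; linarith
  have hin : ∀ w ∈ ball a R, ‖w‖ + R < 1 := by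
    intro w hw
    rw [mem_ball, dist_eq_norm] at hw
    have : ‖w‖ ≤ ‖w - a‖ + ‖a‖ := by simpa using norm_add_le (w - a) a
    linarith
  have hL : ∀ i, ∀ w ∈ ball a R, ‖f i w - f i a‖ ≤ 1 / R * ‖w - a‖ := by
    intro i w hw
    exact (convex_ball a R).norm_image_sub_le_of_norm_deriv_le
      (fun x hx => hf i x (by linarith [hin x hx]))
      (fun x hx => deriv_bound (hf i) (hb i) hR (hin x hx)) (mem_ball_self hR) hw
  have hLF : ∀ w ∈ ball a R, ‖F w - F a‖ ≤ 1 / R * ‖w - a‖ := by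
    intro w hw
    have t := (((hF w (by linarith [hin w hw])).2).sub (hF a ha').2).norm
    exact le_of_tendsto t (Eventually.of_forall fun i => hL i w hw)
  have hδ : 0 < min R (R * ε / 3) := by positivity
  refine ⟨ball a (min R (R * ε / 3)), mem_nhdsWithin_of_mem_nhds (ball_mem_nhds a hδ), ?_⟩
  have hlim := Metric.tendsto_nhds.mp (hF a ha').2 (ε / 3) (by positivity)
  filter_upwards [hlim] with i hi w hw
  rw [mem_ball, dist_eq_norm, lt_min_iff] at hw
  have hwR : w ∈ ball a R := by rw [mem_ball, dist_eq_norm]; exact hw.1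
  have h1 := hL i w hwR
  have h2 := hLF w hwR
  have h3 : 1 / R * ‖w - a‖ < ε / 3 := by
    rw [one_div, inv_mul_lt_iff₀ hR]; linarith [hw.2]
  rw [dist_eq_norm] at hi ⊢
  have e : F w - f i w = (F w - F a) - (f i a - F a) - (f i w - f i a) := by ring
  rw [e]
  have := norm_sub_le ((F w - F a) - (f i a - F a)) (f i w - f i a)
  have := norm_sub_le (F w - F a) (f i a - F a)
  linarith

theorem bergman_main (φ : ℂ → ℂ)
    (hφ : ∀ z ∈ ball (0 : ℂ) 1, DifferentiableAt ℂ φ z)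
    (hne : ∃ z ∈ ball (0 : ℂ) 1, φ z ≠ 0)
    (hphiint : IntegrableOn (fun z : ℂ => (1 - ‖z‖ ^ 2) * ‖φ z‖ ^ 2) (ball 0 1) volume) :
    ∃ f : ℂ → ℂ,
      (∀ z ∈ ball (0 : ℂ) 1, DifferentiableAt ℂ f z) ∧
      (∀ z ∈ ball (0 : ℂ) 1, ‖f z‖ ≤ 1) ∧
      (∃ z ∈ ball (0 : ℂ) 1, ∃ w ∈ ball (0 : ℂ) 1, f z ≠ f w) ∧
      ∀ z ∈ ball (0 : ℂ) 1, vOrder (deriv f) z = vOrder φ z := by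
  have hφd : DifferentiableOn ℂ φ (ball 0 1) := fun z hz => (hφ z hz).differentiableWithinAt
  obtain ⟨Φ, H, hΦ, hH, hHΦ⟩ := exists_prim_majorant φ hφd hphiint
  set r : ℕ → ℝ := fun i => 1 - 1 / ((i : ℝ) + 2) with hrdef
  have hr0 : ∀ i, 0 < r i := by
    intro i
    have : 1 / ((i : ℝ) + 2) < 1 := by
      rw [div_lt_one (by positivity)]; linarith [(Nat.cast_nonneg i : (0:ℝ) ≤ i)]
    simp only [hrdef]; linarith
  have hr1 : ∀ i, r i < 1 := by
    intro i
    have : 0 < 1 / ((i : ℝ) + 2) := by positivity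
    simp only [hrdef]; linarith
  have hrlim0 : Tendsto r atTop (𝓝 1) := by
    have h1 : Tendsto (fun i : ℕ => (i : ℝ) + 2) atTop atTop :=
      tendsto_atTop_add_const_right _ _ tendsto_natCast_atTop_atTop
    have h2 : Tendsto (fun i : ℕ => 1 / ((i : ℝ) + 2)) atTop (𝓝 0) := by
      simpa [one_div, Function.comp_def] using tendsto_inv_atTop_zero.comp h1
    simpa [hrdef] using (tendsto_const_nhds (x := (1 : ℝ))).sub h2
  have hrlim : Tendsto r (hyperfilter ℕ : Filter ℕ) (𝓝 1) :=
    hrlim0.mono_left Nat.hyperfilter_le_atTop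
  have hrC : Tendsto (fun i => (r i : ℂ)) (hyperfilter ℕ : Filter ℕ) (𝓝 1) := by
    have := (Complex.continuous_ofReal.tendsto 1).comp hrlim
    simpa [Function.comp_def] using this
  have hrz : ∀ z : ℂ, Tendsto (fun i => (r i : ℂ) * z) (hyperfilter ℕ : Filter ℕ) (𝓝 z) := by
    intro z; simpa using hrC.mul_const z
  choose f g hfd hfb hgd hfg hglow using
    fun i => per_r φ Φ H hφd hΦ hH hHΦ hne (r i) (hr0 i) (hr1 i)
  obtain ⟨F, hFb, hFt⟩ := montel_ultra f hfd hfb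
  have hfD : ∀ᶠ i in (hyperfilter ℕ : Filter ℕ), DifferentiableOn ℂ (f i) (ball 0 1) :=
    Eventually.of_forall fun i z hz => (hfd i z (by simpa using hz)).differentiableWithinAt
  have hFD : DifferentiableOn ℂ F (ball 0 1) := hFt.differentiableOn hfD isOpen_ball
  have hFder : ∀ z ∈ ball (0 : ℂ) 1,
      Tendsto (fun i => deriv (f i) z) (hyperfilter ℕ : Filter ℕ) (𝓝 (deriv F z)) :=
    fun z hz => (hFt.deriv hfD isOpen_ball).tendsto_at hz
  have hφlim : ∀ z ∈ ball (0 : ℂ) 1,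
      Tendsto (fun i => φ (r i * z)) (hyperfilter ℕ : Filter ℕ) (𝓝 (φ z)) :=
    fun z hz => (hφ z hz).continuousAt.tendsto.comp (hrz z)
  have hφan : AnalyticOnNhd ℂ φ (ball 0 1) := hφd.analyticOnNhd isOpen_ball
  have hFan : AnalyticOnNhd ℂ (deriv F) (ball 0 1) := (hFD.analyticOnNhd isOpen_ball).deriv
  -- lower bound
  have hlow : ∀ z ∈ ball (0 : ℂ) 1,
      ‖φ z‖ * ((1 - ‖z‖ ^ 2) * Real.exp (-(H z).re - 1)) ≤ ‖deriv F z‖ := by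
    intro z hz
    have hz1 : ‖z‖ < 1 := by simpa using hz
    have hHl : Tendsto (fun i => H (r i * z)) (hyperfilter ℕ : Filter ℕ) (𝓝 (H z)) :=
      (hH z hz1).continuousAt.tendsto.comp (hrz z)
    have hHre : Tendsto (fun i => (H (r i * z)).re) (hyperfilter ℕ : Filter ℕ) (𝓝 (H z).re) :=
      (Complex.continuous_re.tendsto _).comp hHl
    have t1 : Tendsto (fun i => ‖(r i : ℂ) * φ (r i * z)‖ *
        ((1 - ‖z‖ ^ 2) * Real.exp (-(H (r i * z)).re - 1))) (hyperfilter ℕ : Filter ℕ)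
        (𝓝 (‖1 * φ z‖ * ((1 - ‖z‖ ^ 2) * Real.exp (-(H z).re - 1)))) :=
      (hrC.mul (hφlim z hz)).norm.mul
        (((Real.continuous_exp.tendsto _).comp (hHre.neg.sub_const 1)).const_mul _)
    rw [one_mul] at t1
    refine le_of_tendsto_of_tendsto t1 (hFder z hz).norm (Eventually.of_forall fun i => ?_)
    simp only
    rw [hfg i z hz1, norm_mul (_ * _) (g i z)]
    exact mul_le_mul_of_nonneg_left (hglow i z hz1) (norm_nonneg _)
  -- upper bound
  have hup : ∀ a ∈ ball (0 : ℂ) 1, ∃ C : ℝ, ∀ᶠ z in 𝓝 a, ‖deriv F z‖ ≤ C * ‖φ z‖ := by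
    intro a ha
    have ha1 : ‖a‖ < 1 := by simpa using ha
    have hiso : ∀ᶠ z in 𝓝[≠] a, φ z ≠ 0 := by
      rcases (hφan a ha).eventually_eq_zero_or_eventually_ne_zero with h | h
      · exfalso
        obtain ⟨w, hw, hw0⟩ := hne
        exact hw0 (hφan.eqOn_zero_of_preconnected_of_eventuallyEq_zero
          (convex_ball _ _).isPreconnected ha h hw)
      · exact h
    obtain ⟨ρ₀, hρ₀, hρ⟩ := Metric.mem_nhds_iff.mp (eventually_nhdsWithin_iff.mp hiso)
    set ρ := min (ρ₀ / 2) ((1 - ‖a‖) / 3) with hρdef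
    have hρp : 0 < ρ := by
      rw [hρdef]; apply lt_min <;> linarith
    have hρ1 : ρ ≤ ρ₀ / 2 := min_le_left _ _
    have hρ2 : ρ ≤ (1 - ‖a‖) / 3 := min_le_right _ _
    have hin : ∀ z ∈ closedBall a ρ, ‖z‖ + ρ < 1 := by
      intro z hz
      rw [mem_closedBall, dist_eq_norm] at hz
      have : ‖z‖ ≤ ‖z - a‖ + ‖a‖ := by simpa using norm_add_le (z - a) a
      linarith
    have hφs : ∀ z ∈ sphere a ρ, φ z ≠ 0 := by
      intro z hz
      have hz' : dist z a = ρ := hz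
      refine hρ (show z ∈ ball a ρ₀ by rw [mem_ball]; linarith) ?_
      intro h
      simp only [Set.mem_singleton_iff] at h
      rw [h, dist_self] at hz'; linarith
    -- uniform lower bound on the circle
    have hδ : ∃ δ > 0, ∀ᶠ i in (hyperfilter ℕ : Filter ℕ), ∀ z ∈ sphere a ρ,
        δ ≤ ‖(r i : ℂ) * φ (r i * z)‖ := by
      have hcont : ∀ z ∈ sphere a ρ, ContinuousAt (fun p : ℂ × ℂ => ‖p.1 * φ (p.1 * p.2)‖) (1, z) := by
        intro z hz
        have hz1 : ‖z‖ < 1 := by linarith [hin z (sphere_subset_closedBall hz)]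
        have hc : ContinuousAt φ ((fun p : ℂ × ℂ => p.1 * p.2) (1, z)) := by
          simpa using (hφ z (by simpa using hz1)).continuousAt
        have hc2 : ContinuousAt (fun p : ℂ × ℂ => φ (p.1 * p.2)) (1, z) :=
          ContinuousAt.comp (f := fun p : ℂ × ℂ => p.1 * p.2) hc (by fun_prop)
        exact (continuousAt_fst.mul hc2).norm
      have hφc : ContinuousOn (fun z => ‖φ z‖) (sphere a ρ) := by
        intro z hz
        have hz1 : ‖z‖ < 1 := by linarith [hin z (sphere_subset_closedBall hz)]
        exact (hφ z (by simpa using hz1)).continuousAt.norm.continuousWithinAt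
      obtain ⟨w, hw, hmin⟩ := (isCompact_sphere a ρ).exists_isMinOn
        (NormedSpace.sphere_nonempty.mpr hρp.le) hφc
      have hwp : 0 < ‖φ w‖ := norm_pos_iff.mpr (hφs w hw)
      refine ⟨‖φ w‖ / 2, by positivity, ?_⟩
      have hev : ∀ᶠ c in 𝓝 (1 : ℂ), ∀ z ∈ sphere a ρ, ‖φ w‖ / 2 < ‖c * φ (c * z)‖ := by
        refine (isCompact_sphere a ρ).eventually_forall_of_forall_eventually fun z hz => ?_
        have h1 : ‖φ w‖ ≤ ‖φ z‖ := hmin hz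
        have h2 := (hcont z hz).tendsto
        simp only [one_mul] at h2
        exact h2.eventually (lt_mem_nhds (by linarith))
      filter_upwards [hrC.eventually hev] with i hi z hz
      exact (hi z hz).le
    obtain ⟨δ, hδp, hδe⟩ := hδ
    refine ⟨1 / ρ / δ, ?_⟩
    filter_upwards [ball_mem_nhds a hρp] with z hz
    have hzc := ball_subset_closedBall hz
    have hz1 : ‖z‖ < 1 := by linarith [hin z hzc]
    have hzb : z ∈ ball (0 : ℂ) 1 := by simpa using hz1
    have t2 : Tendsto (fun i => 1 / ρ / δ * ‖(r i : ℂ) * φ (r i * z)‖) (hyperfilter ℕ : Filter ℕ)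
        (𝓝 (1 / ρ / δ * ‖1 * φ z‖)) := (hrC.mul (hφlim z hzb)).norm.const_mul _
    rw [one_mul] at t2
    refine le_of_tendsto_of_tendsto (hFder z hzb).norm t2 ?_
    filter_upwards [hδe] with i hi
    have hgz : ‖g i z‖ ≤ 1 / ρ / δ := by
      refine Complex.norm_le_of_forall_mem_frontier_norm_le (U := ball a ρ) isBounded_ball ?_ ?_
        (subset_closure hz)
      · exact DifferentiableOn.diffContOnCl_ball (U := closedBall a ρ)
          (fun w hw => (hgd i w (by linarith [hin w hw])).differentiableWithinAt) subset_rfl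
      · intro w hw
        rw [frontier_ball a hρp.ne'] at hw
        have hwi := hin w (sphere_subset_closedBall hw)
        have hd := deriv_bound (hfd i) (hfb i) hρp hwi
        rw [hfg i w (by linarith), norm_mul (_ * _) (g i w)] at hd
        rw [le_div_iff₀ hδp]
        have := mul_le_mul_of_nonneg_right (hi w hw) (norm_nonneg (g i w))
        linarith
    rw [hfg i z hz1, norm_mul (_ * _) (g i z), mul_comm]
    exact mul_le_mul_of_nonneg_right hgz (norm_nonneg _)
  refine ⟨F, fun z hz => hFD.differentiableAt (isOpen_ball.mem_nhds hz),
    fun z hz => hFb z (by simpa using hz), ?_, ?_⟩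
  · obtain ⟨w, hw, hw0⟩ := hne
    by_contra hcon
    push Not at hcon
    have hw1 : ‖w‖ < 1 := by simpa using hw
    have hc : F =ᶠ[𝓝 w] fun _ => F w := by
      filter_upwards [isOpen_ball.mem_nhds hw] with z hz
      exact hcon z hz w hw
    have hd : deriv F w = 0 := by rw [hc.deriv_eq]; simp
    have h1 := hlow w hw
    rw [hd, norm_zero] at h1
    have : 0 < 1 - ‖w‖ ^ 2 := by nlinarith [norm_nonneg w]
    have : 0 < ‖φ w‖ := norm_pos_iff.mpr hw0
    have : 0 < ‖φ w‖ * ((1 - ‖w‖ ^ 2) * Real.exp (-(H w).re - 1)) := by positivity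
    linarith
  · intro a ha
    have ha1 : ‖a‖ < 1 := by simpa using ha
    rw [vOrder_eq_analyticOrderAt (hFan a ha), vOrder_eq_analyticOrderAt (hφan a ha)]
    apply le_antisymm
    · -- φ is bounded by a multiple of F'
      set m : ℂ → ℝ := fun z => (1 - ‖z‖ ^ 2) * Real.exp (-(H z).re - 1) with hm
      have hmc : ContinuousAt m a := by
        have := (hH a ha1).continuousAt
        have h2 : ContinuousAt (fun z => (H z).re) a :=
          Complex.continuous_re.continuousAt.comp this
        simp only [hm]
        fun_prop
      have hma : 0 < m a := by
        have : 0 < 1 - ‖a‖ ^ 2 := by nlinarith [norm_nonneg a]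
        simp only [hm]; positivity
      refine analyticOrderAt_le_of_bound (hφan a ha) (hFan a ha) (m a / 2)⁻¹ ?_
      filter_upwards [isOpen_ball.mem_nhds ha,
        hmc.tendsto.eventually (lt_mem_nhds (by linarith : m a / 2 < m a))] with z hz hmz
      have h1 := hlow z hz
      change ‖φ z‖ * m z ≤ _ at h1
      rw [le_inv_mul_iff₀ (by linarith)]
      have := mul_le_mul_of_nonneg_left hmz.le (norm_nonneg (φ z))
      linarith
    · obtain ⟨C, hC⟩ := hup a ha
      exact analyticOrderAt_le_of_bound (hFan a ha) (hφan a ha) C hC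

end

/-- **Bergman zero sets are critical sets.** For every holomorphic function `φ` on the
open unit disk, not identically zero, belonging to the Bergman space `A²₁`
(`∬_𝔻 (1 − |z|²)|φ(z)|² dxdy < ∞`), there is a nonconstant holomorphic map `f` of the
disk into the closed unit disk such that the order of vanishing of `f'` at every
point of the disk equals that of `φ`. -/
theorem bergman_zero_set_is_critical_set (φ : ℂ → ℂ)
    (hφ_diff : ∀ z ∈ Metric.ball (0 : ℂ) 1, DifferentiableAt ℂ φ z)
    (hφ_ne : ∃ z ∈ Metric.ball (0 : ℂ) 1, φ z ≠ 0)
    (hφ_int : IntegrableOn (fun z : ℂ => (1 - ‖z‖ ^ 2) * ‖φ z‖ ^ 2)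
      (Metric.ball 0 1) volume) :
    ∃ f : ℂ → ℂ,
      (∀ z ∈ Metric.ball (0 : ℂ) 1, DifferentiableAt ℂ f z) ∧
      (∀ z ∈ Metric.ball (0 : ℂ) 1, ‖f z‖ ≤ 1) ∧
      (∃ z ∈ Metric.ball (0 : ℂ) 1, ∃ w ∈ Metric.ball (0 : ℂ) 1, f z ≠ f w) ∧
      ∀ z ∈ Metric.ball (0 : ℂ) 1, vOrder (deriv f) z = vOrder φ z :=
  bergman_main φ hφ_diff hφ_ne hφ_int
end
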